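/- arXiv:2501.17967 — 4 statements merged into one kernel-verified Lean document; each statement's English description precedes it below -/
import Mathlib

section
/- Let f̃ : ℝ² → ℝ be integrable with compact support K. Then its logarithmic potential ṽ(x) := (1/(2π)) ∫_{ℝ²} log‖x − y‖ · f̃(y) dy is real analytic on the open set ℝ² \ K (i.e., ṽ is AnalyticOn ℝ on the complement of the support). -/
/-!
Fix `x₀` off the support `K` and `r > 0` with `ball x₀ r` disjoint from `K`. For `x` in this ball
and `y ∈ K`, the factorisation `x - y = (x₀ - y) * (1 + (x - x₀) / (x₀ - y))` has its last factor
in the slit plane, as `‖(x - x₀) / (x₀ - y)‖ < 1`. Hence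
`log ‖x - y‖ = log ‖x₀ - y‖ + re (log (1 + (x - x₀) / (x₀ - y)))`, and integrating against `f`
shows that the potential is a constant plus the real part of
`G x = ∫ y, log (1 + (x - x₀) / (x₀ - y)) * f y`. On `ball x₀ (r / 2)` one may differentiate under
the integral sign, as the derivative `(x - y)⁻¹ * f y` of the integrand is at most `2 / r * |f y|`.
So `G` is holomorphic there, and its real part is real analytic.
-/

open MeasureTheory Real Set Filter Topology

noncomputable section

/-- A function that is continuous on the compact support of an integrable function `f` stays
integrable after multiplication by `f`, whatever its values off that support. -/
lemma integrable_mul_of_continuousOn_tsupport {A : Type*} [NormedRing A] {f g : ℂ → A}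
    (hf : Integrable f) (hsupp : HasCompactSupport f) (hg : ContinuousOn g (tsupport f)) :
    Integrable fun y => g y * f y := by
  have h : IntegrableOn (fun y => g y * f y) (tsupport f) :=
    hf.integrableOn.continuousOn_mul hg hsupp
  refine (integrableOn_iff_integrable_of_support_subset fun y hy => ?_).1 h
  exact subset_tsupport f fun h0 => hy (by simp [h0])

lemma one_add_div_mem_slitPlane {x₀ x y : ℂ} {r : ℝ} (hx : ‖x - x₀‖ < r) (hy : r ≤ ‖x₀ - y‖) :
    1 + (x - x₀) / (x₀ - y) ∈ Complex.slitPlane := by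
  apply Complex.mem_slitPlane_of_norm_lt_one
  have h0 : 0 < ‖x₀ - y‖ := (norm_nonneg _).trans_lt (hx.trans_le hy)
  rw [norm_div, div_lt_one h0]
  exact hx.trans_le hy

/-- The part of `log ‖x - y‖` that depends on `x` is the real part of a holomorphic function of `x`,
given by the principal branch of the logarithm since `1 + (x - x₀) / (x₀ - y)` avoids the cut. -/
lemma log_norm_sub_eq {x₀ x y : ℂ} {r : ℝ} (hx : ‖x - x₀‖ < r) (hy : r ≤ ‖x₀ - y‖) :
    Real.log ‖x - y‖ =
      Real.log ‖x₀ - y‖ + (Complex.log (1 + (x - x₀) / (x₀ - y))).re := by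
  have h0 : 0 < ‖x₀ - y‖ := (norm_nonneg _).trans_lt (hx.trans_le hy)
  have h1 : x₀ - y ≠ 0 := norm_pos_iff.1 h0
  have h2 := Complex.slitPlane_ne_zero (one_add_div_mem_slitPlane hx hy)
  rw [Complex.log_re, ← Real.log_mul h0.ne' (norm_ne_zero_iff.2 h2), ← norm_mul]
  congr 2
  field_simp
  ring

lemma hasDerivAt_log_one_add_div {x₀ x y : ℂ} {r : ℝ} (hx : ‖x - x₀‖ < r)
    (hy : r ≤ ‖x₀ - y‖) :
    HasDerivAt (fun x => Complex.log (1 + (x - x₀) / (x₀ - y))) (x - y)⁻¹ x := by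
  have h0 : 0 < ‖x₀ - y‖ := (norm_nonneg _).trans_lt (hx.trans_le hy)
  have h1 : x₀ - y ≠ 0 := norm_pos_iff.1 h0
  have hs := one_add_div_mem_slitPlane hx hy
  have h3 : 1 + (x - x₀) / (x₀ - y) = (x - y) / (x₀ - y) := by
    field_simp
    ring
  have hd : HasDerivAt (fun x => 1 + (x - x₀) / (x₀ - y)) (1 / (x₀ - y)) x :=
    (((hasDerivAt_id x).sub_const x₀).div_const (x₀ - y)).const_add 1
  convert hd.clog hs using 1
  rw [h3, div_div_div_cancel_right₀ h1, one_div]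

/-- The logarithmic potential of an integrable, compactly supported
function `f̃ : ℝ² → ℝ` (with `ℝ²` identified with `ℂ`) is real analytic off the support. -/
theorem logPotential_analyticOn_compl_support
    (f : ℂ → ℝ) (hf : Integrable f) (hsupp : HasCompactSupport f)
    (vt : ℂ → ℝ)
    (hvt : ∀ x : ℂ, vt x = (1 / (2 * π)) * ∫ y : ℂ, Real.log ‖x - y‖ * f y) :
    AnalyticOnNhd ℝ vt (tsupport f)ᶜ := by
  intro x₀ hx₀
  obtain ⟨r, hr, hball⟩ :=
    Metric.isOpen_iff.1 (isClosed_tsupport f).isOpen_compl x₀ hx₀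
  have hK : ∀ y ∈ tsupport f, r ≤ ‖x₀ - y‖ := by
    intro y hy
    by_contra! h
    exact hball (by rwa [Metric.mem_ball, dist_comm, dist_eq_norm]) hy
  have hK0 : ∀ y ∈ tsupport f, x₀ - y ≠ 0 := fun y hy =>
    norm_pos_iff.1 (hr.trans_le (hK y hy))
  -- `f` with complex values, so that the holomorphic integrand can be multiplied by it
  set fc : ℂ → ℂ := fun y => (f y : ℂ) with hfc
  have hfci : Integrable fc := hf.ofReal
  have hts : tsupport fc = tsupport f := by
    have : Function.support fc = Function.support f := by
      ext y
      simp [hfc]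
    rw [tsupport, this, tsupport]
  have hfcs : HasCompactSupport fc := by
    rw [HasCompactSupport, hts]
    exact hsupp
  have hint : ∀ x ∈ Metric.ball x₀ r,
      Integrable fun y => Complex.log (1 + (x - x₀) / (x₀ - y)) * fc y := by
    intro x hx
    rw [mem_ball_iff_norm] at hx
    refine integrable_mul_of_continuousOn_tsupport hfci hfcs ?_
    rw [hts]
    refine ContinuousOn.clog ?_ fun y hy => one_add_div_mem_slitPlane hx (hK y hy)
    exact continuousOn_const.add
      (continuousOn_const.div (continuousOn_const.sub continuousOn_id) hK0)
  have hint0 : Integrable fun y => Real.log ‖x₀ - y‖ * f y := by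
    refine integrable_mul_of_continuousOn_tsupport hf hsupp ?_
    exact ContinuousOn.log (continuousOn_const.sub continuousOn_id).norm
      fun y hy => norm_ne_zero_iff.2 (hK0 y hy)
  set G : ℂ → ℂ := fun x => ∫ y, Complex.log (1 + (x - x₀) / (x₀ - y)) * fc y with hG
  have hvG : ∀ x ∈ Metric.ball x₀ r,
      vt x = (1 / (2 * π)) * ((∫ y, Real.log ‖x₀ - y‖ * f y) + (G x).re) := by
    intro x hx
    have hre : (G x).re = ∫ y, (Complex.log (1 + (x - x₀) / (x₀ - y)) * fc y).re :=
      (integral_re (hint x hx)).symm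
    have hre' : Integrable fun y => (Complex.log (1 + (x - x₀) / (x₀ - y)) * fc y).re :=
      (hint x hx).re
    rw [hvt, hre, ← integral_add hint0 hre']
    congr 1
    refine integral_congr_ae (Eventually.of_forall fun y => ?_)
    by_cases hy : y ∈ tsupport f
    · simp only [hfc, Complex.re_mul_ofReal]
      rw [log_norm_sub_eq (mem_ball_iff_norm.1 hx) (hK y hy), add_mul]
    · simp [hfc, image_eq_zero_of_notMem_tsupport hy]
  have hGd : DifferentiableOn ℂ G (Metric.ball x₀ (r / 2)) := by
    intro x hx
    have hsub : ∀ z ∈ Metric.ball x₀ (r / 2), z ∈ Metric.ball x₀ r := fun z hz =>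
      Metric.ball_subset_ball (by linarith) hz
    have hmem : Metric.ball x₀ (r / 2) ∈ 𝓝 x := Metric.isOpen_ball.mem_nhds hx
    have key := hasDerivAt_integral_of_dominated_loc_of_deriv_le (𝕜 := ℂ) (μ := volume)
      (F := fun x y => Complex.log (1 + (x - x₀) / (x₀ - y)) * fc y)
      (F' := fun x y => (x - y)⁻¹ * fc y) (bound := fun y => 2 / r * ‖fc y‖)
      hmem
      (by filter_upwards [hmem] with z hz using (hint z (hsub z hz)).aestronglyMeasurable)
      (hint x (hsub x hx))
      ((by fun_prop : Measurable fun y : ℂ => (x - y)⁻¹).aestronglyMeasurable.mul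
        hfci.aestronglyMeasurable)
      (Eventually.of_forall fun y z hz => ?_)
      (hfci.norm.const_mul _)
      (Eventually.of_forall fun y z hz => ?_)
    · exact key.2.differentiableAt.differentiableWithinAt
    · by_cases hy : y ∈ tsupport f
      · rw [norm_mul, norm_inv]
        gcongr
        have h1 := mem_ball_iff_norm.1 hz
        have h2 : r / 2 ≤ ‖z - y‖ := by
          have h3 := norm_sub_le (z - y) (z - x₀)
          rw [show z - y - (z - x₀) = x₀ - y by ring] at h3
          linarith [hK y hy]
        rw [← inv_div]
        exact inv_anti₀ (by positivity) h2
      · simp [hfc, image_eq_zero_of_notMem_tsupport hy]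
    · by_cases hy : y ∈ tsupport f
      · exact (hasDerivAt_log_one_add_div (mem_ball_iff_norm.1 (hsub z hz))
          (hK y hy)).mul_const _
      · simpa [hfc, image_eq_zero_of_notMem_tsupport hy] using hasDerivAt_const z (0 : ℂ)
  have hGa : AnalyticAt ℝ G x₀ :=
    (hGd.analyticAt (Metric.ball_mem_nhds x₀ (by positivity))).restrictScalars
  have hGre : AnalyticAt ℝ (fun x => (G x).re) x₀ :=
    (Complex.reCLM.analyticAt _).comp hGa
  have hA : AnalyticAt ℝ
      (fun x => (1 / (2 * π)) * ((∫ y, Real.log ‖x₀ - y‖ * f y) + (G x).re)) x₀ :=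
    analyticAt_const.mul (analyticAt_const.add hGre)
  refine hA.congr ?_
  filter_upwards [Metric.ball_mem_nhds x₀ hr] with x hx using (hvG x hx).symm
end
end

section
/- Let f : ℝ² → ℝ be infinitely differentiable with compact support. Then the Newton potential v(x) := (1/(2π)) ∫_{ℝ²} log‖x − y‖ · f(y) dy is an infinitely differentiable function on ℝ² satisfying Δv(x) = f(x) for every x ∈ ℝ² (i.e., (1/(2π)) log‖·‖ is a fundamental solution of the Laplacian in two dimensions). -/
/-!
Since `log ‖·‖` is locally integrable, `v` is a constant times the convolution `log ‖·‖ ⋆ f`, which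
is smooth because `f` is, and all derivatives may be put on `f` (`lap_conv`). With
`g y = f (x - y)`, the equation `Δv(x) = f(x)` becomes `∫ log ‖y‖ Δg(y) dy = 2π g(0)`
(`integral_log_mul_lap`).

To prove the latter, replace `log ‖y‖` by the smooth function `½ log (‖y‖² + δ²)` (`regLog`).
Green's identity (`green`) moves the Laplacian onto it, and
`Δ (½ log (‖y‖² + δ²)) = 2δ² / (‖y‖² + δ²)²` (`lap_regLog`) is the rescaling by `δ` of the kernel
`2 / (‖z‖² + 1)²`, of total mass `2π` (`integral_kernel`). As `δ → 0⁺`, dominated convergence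
applies on both sides: the left-hand integral tends to `∫ log ‖y‖ Δg(y) dy` (`tendsto_regLog`) and
the right-hand one, `∫ 2 / (‖z‖² + 1)² g(δz) dz`, tends to `2π g(0)` (`tendsto_kernel`).
-/


open MeasureTheory Real Set Filter Topology

noncomputable section

/-- The Laplacian `∂²v/∂x₁² + ∂²v/∂x₂²` of `v : ℂ → ℝ`, identifying `ℝ²` with `ℂ`
(directions `1` and `I`). -/
def lap (v : ℂ → ℝ) (x : ℂ) : ℝ :=
  fderiv ℝ (fun y => fderiv ℝ v y 1) x 1 + fderiv ℝ (fun y => fderiv ℝ v y Complex.I) x Complex.I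

lemma locallyIntegrable_log_norm : LocallyIntegrable (fun y : ℂ => Real.log ‖y‖) := by
  rw [locallyIntegrable_iff]
  intro k hk
  obtain ⟨r, hr⟩ := hk.isBounded.subset_ball (0 : ℂ)
  refine IntegrableOn.mono_set ?_ hr
  -- In polar coordinates the integrand becomes `r * log r`, which is continuous on `ℝ`.
  rw [integrableOn_fun_norm_addHaar volume (f := Real.log)]
  have hc : Continuous fun y : ℝ => y * Real.log y := Real.continuous_mul_log
  have := (hc.integrableOn_Icc (μ := volume) (a := 0) (b := r)).mono_set Ioo_subset_Icc_self
  simpa [Complex.finrank_real_complex] using this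

lemma integral_kernel : ∫ z : ℂ, 2 / (‖z‖ ^ 2 + 1) ^ 2 = 2 * π := by
  rw [integral_fun_norm_addHaar volume (fun r : ℝ => 2 / (r ^ 2 + 1) ^ 2)]
  -- The radial integrand has the primitive `-1 / (r² + 1)`.
  have h : ∫ y in Ioi (0 : ℝ), y * (2 / (y ^ 2 + 1) ^ 2) = 0 - -((0 : ℝ) ^ 2 + 1)⁻¹ := by
    refine integral_Ioi_of_hasDerivAt_of_nonneg' (g := fun y => -(y ^ 2 + 1)⁻¹) ?_ ?_ ?_
    · intro x _
      have := ((((hasDerivAt_id x).pow 2).add_const 1).inv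
        (by simp; positivity)).neg
      convert! this using 1
      simp
      ring
    · intro x hx
      have : 0 < x := hx
      positivity
    · have : Tendsto (fun y : ℝ => (y ^ 2 + 1)⁻¹) atTop (𝓝 0) :=
        ((tendsto_pow_atTop two_ne_zero).atTop_add tendsto_const_nhds).inv_tendsto_atTop
      simpa using this.neg
  simp [Complex.finrank_real_complex, h, measureReal_def, Complex.volume_ball]

lemma integrable_kernel : Integrable fun z : ℂ => 2 / (‖z‖ ^ 2 + 1) ^ 2 :=
  .of_integral_ne_zero (by rw [integral_kernel]; positivity)

lemma smooth_deriv {g : ℂ → ℝ} (hg : ContDiff ℝ (⊤ : ℕ∞) g) (e : ℂ) :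
    ContDiff ℝ (⊤ : ℕ∞) fun y => fderiv ℝ g y e :=
  (hg.fderiv_right (m := (⊤ : ℕ∞)) (by simp)).clm_apply contDiff_const

lemma smooth_lap {g : ℂ → ℝ} (hg : ContDiff ℝ (⊤ : ℕ∞) g) : ContDiff ℝ (⊤ : ℕ∞) (lap g) :=
  (smooth_deriv (smooth_deriv hg 1) 1).add (smooth_deriv (smooth_deriv hg _) _)

lemma hasCompactSupport_lap {g : ℂ → ℝ} (hs : HasCompactSupport g) :
    HasCompactSupport (lap g) :=
  ((hs.fderiv_apply ℝ 1).fderiv_apply ℝ 1).add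
    ((hs.fderiv_apply ℝ Complex.I).fderiv_apply ℝ Complex.I)

lemma integrable_mul_cs {a b : ℂ → ℝ} (ha : Continuous a) (hb : Continuous b)
    (hs : HasCompactSupport b) : Integrable fun x => a x * b x :=
  (ha.mul hb).integrable_of_hasCompactSupport hs.mul_left

lemma integral_mul_deriv {L g : ℂ → ℝ} (hL : ContDiff ℝ (⊤ : ℕ∞) L)
    (hg : ContDiff ℝ (⊤ : ℕ∞) g) (hs : HasCompactSupport g) (e : ℂ) :
    ∫ y, L y * fderiv ℝ g y e = -∫ y, fderiv ℝ L y e * g y :=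
  integral_mul_fderiv_eq_neg_fderiv_mul_of_integrable
    (integrable_mul_cs (smooth_deriv hL e).continuous hg.continuous hs)
    (integrable_mul_cs hL.continuous (smooth_deriv hg e).continuous (hs.fderiv_apply ℝ e))
    (integrable_mul_cs hL.continuous hg.continuous hs)
    (fun x _ => hL.differentiable (by simp) x) (fun x _ => hg.differentiable (by simp) x)

/-- Green's identity on the whole plane: there are no boundary terms as `g` has compact support. -/
lemma green {L g : ℂ → ℝ} (hL : ContDiff ℝ (⊤ : ℕ∞) L)
    (hg : ContDiff ℝ (⊤ : ℕ∞) g) (hs : HasCompactSupport g) :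
    ∫ y, L y * lap g y = ∫ y, lap L y * g y := by
  have H (e : ℂ) : ∫ y, L y * fderiv ℝ (fun y => fderiv ℝ g y e) y e
      = ∫ y, fderiv ℝ (fun y => fderiv ℝ L y e) y e * g y := by
    rw [integral_mul_deriv hL (smooth_deriv hg e) (hs.fderiv_apply ℝ e),
      integral_mul_deriv (smooth_deriv hL e) hg hs, neg_neg]
  have I1 (e : ℂ) : Integrable fun y => L y * fderiv ℝ (fun y => fderiv ℝ g y e) y e :=
    integrable_mul_cs hL.continuous (smooth_deriv (smooth_deriv hg e) e).continuous
      ((hs.fderiv_apply ℝ e).fderiv_apply ℝ e)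
  have I2 (e : ℂ) : Integrable fun y => fderiv ℝ (fun y => fderiv ℝ L y e) y e * g y :=
    integrable_mul_cs (smooth_deriv (smooth_deriv hL e) e).continuous hg.continuous hs
  simp only [lap, mul_add, add_mul]
  rw [integral_add (I1 _) (I1 _), integral_add (I2 _) (I2 _), H, H]

/-- The regularization `½ log (‖y‖² + δ²)` of `log ‖y‖`, smooth on the whole plane when `δ ≠ 0`. -/
def regLog (δ : ℝ) (y : ℂ) : ℝ := Real.log (‖y‖ ^ 2 + δ ^ 2) / 2

lemma contDiff_regLog {δ : ℝ} (hδ : δ ≠ 0) : ContDiff ℝ (⊤ : ℕ∞) (regLog δ) := by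
  refine (ContDiff.log ?_ fun y => by positivity).div_const 2
  exact (contDiff_norm_sq ℝ).add contDiff_const

lemma lap_regLog {δ : ℝ} (hδ : δ ≠ 0) (y : ℂ) :
    lap (regLog δ) y = 2 * δ ^ 2 / (‖y‖ ^ 2 + δ ^ 2) ^ 2 := by
  have hre (y : ℂ) : HasFDerivAt (fun y : ℂ => y.re) Complex.reCLM y := Complex.reCLM.hasFDerivAt
  have him (y : ℂ) : HasFDerivAt (fun y : ℂ => y.im) Complex.imCLM y := Complex.imCLM.hasFDerivAt
  have hq (y : ℂ) : ‖y‖ ^ 2 = y.re ^ 2 + y.im ^ 2 := by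
    rw [Complex.sq_norm, Complex.normSq_apply]; ring
  have hpos (y : ℂ) : y.re ^ 2 + y.im ^ 2 + δ ^ 2 ≠ 0 := by positivity
  have hQ (y : ℂ) := (((hre y).pow 2).add ((him y).pow 2)).add_const (δ ^ 2)
  have e1 : regLog δ = fun y => Real.log (y.re ^ 2 + y.im ^ 2 + δ ^ 2) * 2⁻¹ := by
    ext y; rw [regLog, hq]; rfl
  have d1 (y : ℂ) := ((hQ y).log (hpos y)).mul_const (2⁻¹ : ℝ)
  have f1 : (fun y => fderiv ℝ (regLog δ) y 1) = fun y => y.re * (y.re ^ 2 + y.im ^ 2 + δ ^ 2)⁻¹ := by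
    ext y
    rw [e1]
    erw [(d1 y).fderiv]
    simp
    field_simp
  have f2 : (fun y => fderiv ℝ (regLog δ) y Complex.I)
      = fun y => y.im * (y.re ^ 2 + y.im ^ 2 + δ ^ 2)⁻¹ := by
    ext y
    rw [e1]
    erw [(d1 y).fderiv]
    simp
    field_simp
  have hI (y : ℂ) := (hasDerivAt_inv (hpos y)).comp_hasFDerivAt y (hQ y)
  rw [lap, f1, f2]
  erw [((hre y).mul (hI y)).fderiv, ((him y).mul (hI y)).fderiv]
  have := hpos y
  rw [hq]
  simp
  field_simp
  ring

/-- Green's identity followed by the substitution `y = δ z`. -/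
lemma integral_regLog_mul_lap {g : ℂ → ℝ} (hg : ContDiff ℝ (⊤ : ℕ∞) g) (hs : HasCompactSupport g)
    {δ : ℝ} (hδ : δ ≠ 0) :
    ∫ y, regLog δ y * lap g y = ∫ z : ℂ, 2 / (‖z‖ ^ 2 + 1) ^ 2 * g (δ • z) := by
  rw [green (contDiff_regLog hδ) hg hs]
  have h := Measure.integral_comp_smul volume (fun y => lap (regLog δ) y * g y) δ
  have h2 : ∀ z : ℂ, 2 / (‖z‖ ^ 2 + 1) ^ 2 * g (δ • z)
      = δ ^ 2 * (lap (regLog δ) (δ • z) * g (δ • z)) := by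
    intro z
    rw [lap_regLog hδ, norm_smul, mul_pow, Real.norm_eq_abs, sq_abs]
    have : δ ^ 2 * ‖z‖ ^ 2 + δ ^ 2 = δ ^ 2 * (‖z‖ ^ 2 + 1) := by ring
    rw [this]
    have : ‖z‖ ^ 2 + 1 ≠ 0 := by positivity
    field_simp
  simp_rw [h2]
  rw [integral_const_mul, h, Complex.finrank_real_complex, abs_of_nonneg (by positivity),
    smul_eq_mul, mul_inv_cancel_left₀ (by positivity)]

lemma tendsto_kernel {g : ℂ → ℝ} (hg : Continuous g) (hs : HasCompactSupport g) :
    Tendsto (fun δ : ℝ => ∫ z : ℂ, 2 / (‖z‖ ^ 2 + 1) ^ 2 * g (δ • z)) (𝓝[>] 0)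
      (𝓝 (2 * π * g 0)) := by
  rw [← integral_kernel, ← integral_mul_const]
  obtain ⟨C, hC⟩ := hs.exists_bound_of_continuous hg
  refine tendsto_integral_filter_of_dominated_convergence
    (fun z : ℂ => 2 / (‖z‖ ^ 2 + 1) ^ 2 * C) ?_ ?_ (integrable_kernel.mul_const C) ?_
  · refine .of_forall fun δ => (integrable_kernel.aestronglyMeasurable).mul ?_
    exact (hg.comp (continuous_const_smul δ)).aestronglyMeasurable
  · refine .of_forall fun δ => .of_forall fun z => ?_
    rw [norm_mul, Real.norm_of_nonneg (by positivity)]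
    exact mul_le_mul_of_nonneg_left (hC _) (by positivity)
  · refine .of_forall fun z => Tendsto.const_mul _ ?_
    have : Continuous fun δ : ℝ => g (δ • z) := by fun_prop
    simpa using (this.tendsto 0).mono_left nhdsWithin_le_nhds

/-- A bound independent of `δ`, from `log ‖y‖ ≤ regLog δ y ≤ regLog 1 y`; it is the dominating
function in `tendsto_regLog`. -/
lemma abs_regLog_le {δ : ℝ} (hδ : δ ∈ Ioc (0 : ℝ) 1) {y : ℂ} (hy : y ≠ 0) :
    |regLog δ y| ≤ |Real.log ‖y‖| + regLog 1 y := by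
  have hy' : 0 < ‖y‖ := norm_pos_iff.2 hy
  have h1 : Real.log ‖y‖ ≤ regLog δ y := by
    rw [regLog, le_div_iff₀ two_pos, mul_comm]
    have : Real.log (‖y‖ ^ 2) = 2 * Real.log ‖y‖ := by simp
    rw [← this]
    exact Real.log_le_log (by positivity) (by nlinarith [sq_nonneg δ])
  have h2 : regLog δ y ≤ regLog 1 y := by
    unfold regLog
    gcongr
    · have := hδ.1; positivity
    · exact hδ.2
  have h3 : 0 ≤ regLog 1 y := div_nonneg (Real.log_nonneg (by nlinarith)) two_pos.le
  rw [abs_le]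
  constructor
  · linarith [neg_abs_le (Real.log ‖y‖)]
  · linarith [abs_nonneg (Real.log ‖y‖)]

lemma tendsto_regLog {h : ℂ → ℝ} (hc : Continuous h) (hs : HasCompactSupport h) :
    Tendsto (fun δ : ℝ => ∫ y, regLog δ y * h y) (𝓝[>] 0) (𝓝 (∫ y, Real.log ‖y‖ * h y)) := by
  have hpos : ∀ᶠ δ : ℝ in 𝓝[>] 0, δ ∈ Ioc (0 : ℝ) 1 := Ioc_mem_nhdsGT one_pos
  have hne : ∀ᵐ y : ℂ, y ≠ 0 := Measure.ae_ne volume 0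
  refine tendsto_integral_filter_of_dominated_convergence
    (fun y => (|Real.log ‖y‖| + regLog 1 y) * |h y|) ?_ ?_ ?_ ?_
  · filter_upwards [hpos] with δ hδ
    exact ((contDiff_regLog hδ.1.ne').continuous.mul hc).aestronglyMeasurable
  · filter_upwards [hpos] with δ hδ
    filter_upwards [hne] with y hy
    rw [norm_mul, Real.norm_eq_abs, Real.norm_eq_abs]
    exact mul_le_mul_of_nonneg_right (abs_regLog_le hδ hy) (abs_nonneg _)
  · have hl : LocallyIntegrable fun y : ℂ => |Real.log ‖y‖| + regLog 1 y :=
      LocallyIntegrable.add (fun y => (locallyIntegrable_log_norm y).norm)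
        (contDiff_regLog one_ne_zero).continuous.locallyIntegrable
    exact hl.integrable_smul_right_of_hasCompactSupport hc.abs hs.norm
  · filter_upwards [hne] with y hy
    refine Tendsto.mul_const _ ?_
    have hcont : ContinuousAt (fun δ : ℝ => regLog δ y) 0 := by
      unfold regLog
      have : ‖y‖ ^ 2 + (0 : ℝ) ^ 2 ≠ 0 := by positivity
      fun_prop (disch := assumption)
    have h0 : regLog 0 y = Real.log ‖y‖ := by simp [regLog]
    rw [← h0]
    exact hcont.tendsto.mono_left nhdsWithin_le_nhds

/-- The distributional identity `Δ log ‖·‖ = 2π δ₀`. -/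
lemma integral_log_mul_lap {g : ℂ → ℝ} (hg : ContDiff ℝ (⊤ : ℕ∞) g) (hs : HasCompactSupport g) :
    ∫ y, Real.log ‖y‖ * lap g y = 2 * π * g 0 := by
  refine tendsto_nhds_unique
    (tendsto_regLog (smooth_lap hg).continuous (hasCompactSupport_lap hs)) ?_
  refine (tendsto_kernel hg.continuous hs).congr' ?_
  filter_upwards [self_mem_nhdsWithin] with δ hδ
  exact (integral_regLog_mul_lap hg hs (ne_of_gt hδ)).symm

lemma fderiv_reflect {g : ℂ → ℝ} (hg : ContDiff ℝ (⊤ : ℕ∞) g) (x y e : ℂ) :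
    fderiv ℝ (fun y => g (x - y)) y e = -fderiv ℝ g (x - y) e := by
  have h := (hg.differentiable (by simp) (x - y)).hasFDerivAt.comp y
    ((hasFDerivAt_id (𝕜 := ℝ) y).const_sub x)
  erw [h.fderiv]
  simp

lemma lap_reflect {g : ℂ → ℝ} (hg : ContDiff ℝ (⊤ : ℕ∞) g) (x y : ℂ) :
    lap (fun y => g (x - y)) y = lap g (x - y) := by
  have H (e : ℂ) : fderiv ℝ (fun y => fderiv ℝ (fun y => g (x - y)) y e) y e
      = fderiv ℝ (fun y => fderiv ℝ g y e) (x - y) e := by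
    simp_rw [fderiv_reflect hg x _ e]
    rw [fderiv_fun_neg]
    simp [fderiv_reflect (smooth_deriv hg e) x y e]
  rw [lap, H, H, lap]

open scoped Convolution

lemma fderiv_conv {K g : ℂ → ℝ} (hK : LocallyIntegrable K)
    (hg : ContDiff ℝ (⊤ : ℕ∞) g) (hs : HasCompactSupport g) (x e : ℂ) :
    fderiv ℝ (K ⋆[ContinuousLinearMap.mul ℝ ℝ] g) x e
      = (K ⋆[ContinuousLinearMap.mul ℝ ℝ] fun y => fderiv ℝ g y e) x := by
  rw [(hs.hasFDerivAt_convolution_right (ContinuousLinearMap.mul ℝ ℝ) hK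
    (hg.of_le (by exact_mod_cast le_top)) x).fderiv]
  exact convolution_precompR_apply _ hK (hs.fderiv ℝ) (hg.continuous_fderiv (by simp)) x e

lemma lap_conv {K g : ℂ → ℝ} (hK : LocallyIntegrable K)
    (hg : ContDiff ℝ (⊤ : ℕ∞) g) (hs : HasCompactSupport g) (x : ℂ) :
    lap (K ⋆[ContinuousLinearMap.mul ℝ ℝ] g) x = ∫ y, K y * lap g (x - y) := by
  have H (e : ℂ) : fderiv ℝ (fun x => fderiv ℝ (K ⋆[ContinuousLinearMap.mul ℝ ℝ] g) x e) x e
      = ∫ y, K y * fderiv ℝ (fun y => fderiv ℝ g y e) (x - y) e := by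
    simp_rw [fderiv_conv hK hg hs _ e]
    exact fderiv_conv hK (smooth_deriv hg e) (hs.fderiv_apply ℝ e) x e
  have I (e : ℂ) : Integrable fun y => K y * fderiv ℝ (fun y => fderiv ℝ g y e) (x - y) e :=
    ((hs.fderiv_apply ℝ e).fderiv_apply ℝ e).convolutionExists_right
      (ContinuousLinearMap.mul ℝ ℝ) hK (smooth_deriv (smooth_deriv hg e) e).continuous x
  rw [lap, H, H, ← integral_add (I _) (I _)]
  simp only [lap, mul_add]

lemma lap_const_mul {u : ℂ → ℝ} (hu : ContDiff ℝ (⊤ : ℕ∞) u) (c : ℝ) (x : ℂ) :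
    lap (fun y => c * u y) x = c * lap u x := by
  have H {w : ℂ → ℝ} (hw : ContDiff ℝ (⊤ : ℕ∞) w) (x e : ℂ) :
      fderiv ℝ (fun y => c * w y) x e = c * fderiv ℝ w x e := by
    rw [fderiv_const_mul (hw.differentiable (by simp) x)]; rfl
  simp_rw [lap, H hu, H (smooth_deriv hu _)]
  ring

/-- For smooth compactly supported `f`, the Newton potential
`v = (1/2π) log‖·‖ ∗ f` is smooth on all of `ℝ² ≅ ℂ` and satisfies `Δv = f`,
i.e. `(1/2π) log‖·‖` is a fundamental solution of the 2D Laplacian. -/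
theorem newtonPotential_solves_poisson
    (f : ℂ → ℝ) (hf : ContDiff ℝ (⊤ : ℕ∞) f) (hsupp : HasCompactSupport f)
    (v : ℂ → ℝ)
    (hv : ∀ x : ℂ, v x = (1 / (2 * π)) * ∫ y : ℂ, Real.log ‖x - y‖ * f y) :
    ContDiff ℝ (⊤ : ℕ∞) v ∧ ∀ x : ℂ, lap v x = f x := by
  have hK := locallyIntegrable_log_norm
  set u : ℂ → ℝ := (fun y : ℂ => Real.log ‖y‖) ⋆[ContinuousLinearMap.mul ℝ ℝ] f with hu
  have hvu : v = fun x => 1 / (2 * π) * u x := by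
    ext x
    rw [hv, hu, convolution_mul_swap]
  have hus : ContDiff ℝ (⊤ : ℕ∞) u := hsupp.contDiff_convolution_right _ hK hf
  refine ⟨hvu ▸ contDiff_const.mul hus, fun x => ?_⟩
  have key := integral_log_mul_lap (g := fun y => f (x - y))
    (hf.comp (contDiff_const.sub contDiff_id))
    (hsupp.comp_homeomorph (Homeomorph.subLeft x))
  simp_rw [lap_reflect hf, sub_zero] at key
  rw [hvu, lap_const_mul hus, lap_conv hK hf hsupp, key]
  have := Real.pi_pos
  field_simp
end
end

section
/- Let Ω ⊆ ℝ² be open and let C ⊂ Ω be the image of a continuously differentiable map from a compact interval into Ω (a C¹ curve). Suppose v : Ω → ℝ is continuously differentiable on Ω and, on the open set Ω \ C, v is twice continuously differentiable with Δv = 0. Then v is harmonic on all of Ω: v is infinitely differentiable on Ω and Δv = 0 everywhere in Ω. (In other words, matching of the Cauchy data—values and first derivatives—across the interface C suffices for the two harmonic pieces to join into a single harmonic function.) -/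
/-!
The function `F = ∂₁v - i ∂₂v` is continuous on `Ω`, since `v` is `C¹`, and holomorphic on `Ω \ C`,
where `v` is harmonic. A `C¹` curve has finite length, so by Painlevé's removability theorem
(`differentiableOn_of_finiteLength`) `F` is holomorphic on all of `Ω`. Hence `∂₁v = Re F` and
`∂₂v = -Im F` are smooth, so `v` is smooth, and `Δv = 0` by the Cauchy-Riemann equations for `F`.

Painlevé's theorem follows from Morera's theorem once the integral of `F` around every closed
rectangle in `Ω` vanishes (`bdry_eq_zero`). Cut the rectangle into `n × n` cells. Cells that miss
`C` contribute nothing, by Cauchy's theorem. A cell that meets `C` contributes `O(ω / n)`, where `ω`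
is the oscillation of `F` on sets of diameter `O(1 / n)`; this is `O(n ω)` times the area of the
cell. The cells of the second kind lie in a neighbourhood of `C` of width `O(1 / n)`, which has area
`O(1 / n)` because `C` has finite length. So the total is `O(ω)`, and `ω → 0` by uniform continuity.
With `n = 2 ^ m`, the summation over cells is an induction on `m` (`norm_bdry_le_measure`) in which
area replaces the count of cells.
-/

open Real Set

noncomputable section

open MeasureTheory

/-! ### Boundary integrals over rectangles -/

/-- The counterclockwise integral of `f` along the boundary of the rectangle
`[a, b] × [c, d]`. -/
def bdry (f : ℂ → ℂ) (a b c d : ℝ) : ℂ :=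
  (∫ x : ℝ in a..b, f (x + c * Complex.I)) - (∫ x : ℝ in a..b, f (x + d * Complex.I)) +
    Complex.I • (∫ y : ℝ in c..d, f (b + y * Complex.I)) -
    Complex.I • (∫ y : ℝ in c..d, f (a + y * Complex.I))

lemma horiz_integrable {f : ℂ → ℂ} {a b c d : ℝ} (hab : a ≤ b)
    (hf : ContinuousOn f (Icc a b ×ℂ Icc c d)) {y : ℝ} (hy : y ∈ Icc c d) :
    IntervalIntegrable (fun x : ℝ => f (x + y * Complex.I)) volume a b := by
  apply ContinuousOn.intervalIntegrable
  rw [uIcc_of_le hab]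
  refine hf.comp (by fun_prop) fun x hx => ?_
  simpa [Complex.mem_reProdIm] using And.intro hx hy

lemma vert_integrable {f : ℂ → ℂ} {a b c d : ℝ} (hcd : c ≤ d)
    (hf : ContinuousOn f (Icc a b ×ℂ Icc c d)) {x : ℝ} (hx : x ∈ Icc a b) :
    IntervalIntegrable (fun y : ℝ => f (x + y * Complex.I)) volume c d := by
  apply ContinuousOn.intervalIntegrable
  rw [uIcc_of_le hcd]
  refine hf.comp (by fun_prop) fun y hy => ?_
  simpa [Complex.mem_reProdIm] using And.intro hx hy

lemma bdry_split_re {f : ℂ → ℂ} {a b c d : ℝ} (m : ℝ) (ham : a ≤ m) (hmb : m ≤ b) (hcd : c ≤ d)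
    (hf : ContinuousOn f (Icc a b ×ℂ Icc c d)) :
    bdry f a b c d = bdry f a m c d + bdry f m b c d := by
  have h1 : ContinuousOn f (Icc a m ×ℂ Icc c d) :=
    hf.mono (Complex.reProdIm_subset_iff.2 (prod_mono (Icc_subset_Icc_right hmb) subset_rfl))
  have h2 : ContinuousOn f (Icc m b ×ℂ Icc c d) :=
    hf.mono (Complex.reProdIm_subset_iff.2 (prod_mono (Icc_subset_Icc_left ham) subset_rfl))
  have e1 := intervalIntegral.integral_add_adjacent_intervals
    (horiz_integrable ham h1 (left_mem_Icc.2 hcd)) (horiz_integrable hmb h2 (left_mem_Icc.2 hcd))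
  have e2 := intervalIntegral.integral_add_adjacent_intervals
    (horiz_integrable ham h1 (right_mem_Icc.2 hcd)) (horiz_integrable hmb h2 (right_mem_Icc.2 hcd))
  simp only [bdry, ← e1, ← e2]
  ring

lemma bdry_split_im {f : ℂ → ℂ} {a b c d : ℝ} (m : ℝ) (hab : a ≤ b) (hcm : c ≤ m) (hmd : m ≤ d)
    (hf : ContinuousOn f (Icc a b ×ℂ Icc c d)) :
    bdry f a b c d = bdry f a b c m + bdry f a b m d := by
  have h1 : ContinuousOn f (Icc a b ×ℂ Icc c m) :=
    hf.mono (Complex.reProdIm_subset_iff.2 (prod_mono subset_rfl (Icc_subset_Icc_right hmd)))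
  have h2 : ContinuousOn f (Icc a b ×ℂ Icc m d) :=
    hf.mono (Complex.reProdIm_subset_iff.2 (prod_mono subset_rfl (Icc_subset_Icc_left hcm)))
  have e1 := intervalIntegral.integral_add_adjacent_intervals
    (vert_integrable hcm h1 (left_mem_Icc.2 hab)) (vert_integrable hmd h2 (left_mem_Icc.2 hab))
  have e2 := intervalIntegral.integral_add_adjacent_intervals
    (vert_integrable hcm h1 (right_mem_Icc.2 hab)) (vert_integrable hmd h2 (right_mem_Icc.2 hab))
  simp only [bdry, ← e1, ← e2, smul_eq_mul]
  ring

/-- Opposite sides are compared pointwise, so only the oscillation of `f` enters. -/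
lemma norm_bdry_le {f : ℂ → ℂ} {a b c d ε : ℝ} (hab : a ≤ b) (hcd : c ≤ d)
    (hf : ContinuousOn f (Icc a b ×ℂ Icc c d))
    (hosc : ∀ p ∈ Icc a b ×ℂ Icc c d, ∀ q ∈ Icc a b ×ℂ Icc c d, ‖f p - f q‖ ≤ ε) :
    ‖bdry f a b c d‖ ≤ ε * ((b - a) + (d - c)) := by
  have mem : ∀ {x y : ℝ}, x ∈ Icc a b → y ∈ Icc c d →
      (x + y * Complex.I : ℂ) ∈ Icc a b ×ℂ Icc c d := fun hx hy => by
    simpa [Complex.mem_reProdIm] using And.intro hx hy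
  have e : bdry f a b c d =
      (∫ x : ℝ in a..b, (f (x + c * Complex.I) - f (x + d * Complex.I))) +
      Complex.I • (∫ y : ℝ in c..d, (f (b + y * Complex.I) - f (a + y * Complex.I))) := by
    rw [intervalIntegral.integral_sub (horiz_integrable hab hf (left_mem_Icc.2 hcd))
      (horiz_integrable hab hf (right_mem_Icc.2 hcd)),
      intervalIntegral.integral_sub (vert_integrable hcd hf (right_mem_Icc.2 hab))
      (vert_integrable hcd hf (left_mem_Icc.2 hab)), smul_sub, bdry]
    ring
  have n1 : ‖∫ x : ℝ in a..b, (f (x + c * Complex.I) - f (x + d * Complex.I))‖ ≤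
      ε * |b - a| := by
    refine intervalIntegral.norm_integral_le_of_norm_le_const fun x hx => ?_
    rw [uIoc_of_le hab] at hx
    exact hosc _ (mem (Ioc_subset_Icc_self hx) (left_mem_Icc.2 hcd)) _
      (mem (Ioc_subset_Icc_self hx) (right_mem_Icc.2 hcd))
  have n2 : ‖∫ y : ℝ in c..d, (f (b + y * Complex.I) - f (a + y * Complex.I))‖ ≤
      ε * |d - c| := by
    refine intervalIntegral.norm_integral_le_of_norm_le_const fun x hx => ?_
    rw [uIoc_of_le hcd] at hx
    exact hosc _ (mem (right_mem_Icc.2 hab) (Ioc_subset_Icc_self hx)) _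
      (mem (left_mem_Icc.2 hab) (Ioc_subset_Icc_self hx))
  rw [abs_of_nonneg (sub_nonneg.2 hab)] at n1
  rw [abs_of_nonneg (sub_nonneg.2 hcd)] at n2
  rw [e, mul_add]
  refine (norm_add_le _ _).trans (add_le_add n1 ?_)
  rwa [norm_smul, Complex.norm_I, one_mul]

lemma measurableSet_rect (a b c d : ℝ) : MeasurableSet (Ioc a b ×ℂ Ioc c d) :=
  (measurableSet_Ioc.preimage Complex.measurable_re).inter
    (measurableSet_Ioc.preimage Complex.measurable_im)

lemma volume_real_rect {a b c d : ℝ} (hab : a ≤ b) (hcd : c ≤ d) :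
    volume.real (Ioc a b ×ℂ Ioc c d) = (b - a) * (d - c) := by
  have h : Ioc a b ×ℂ Ioc c d = Complex.measurableEquivRealProd ⁻¹' (Ioc a b ×ˢ Ioc c d) := by
    ext z; simp [Complex.mem_reProdIm]
  rw [Measure.real, h, Complex.volume_preserving_equiv_real_prod.measure_preimage
    (measurableSet_Ioc.prod measurableSet_Ioc).nullMeasurableSet, Measure.volume_eq_prod,
    Measure.prod_prod, Real.volume_Ioc, Real.volume_Ioc, ENNReal.toReal_mul,
    ENNReal.toReal_ofReal (sub_nonneg.2 hab), ENNReal.toReal_ofReal (sub_nonneg.2 hcd)]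

lemma real_split_re (μ : Measure ℂ) [IsFiniteMeasure μ] {a b c d : ℝ} (m : ℝ) (ham : a ≤ m)
    (hmb : m ≤ b) : μ.real (Ioc a b ×ℂ Ioc c d) =
      μ.real (Ioc a m ×ℂ Ioc c d) + μ.real (Ioc m b ×ℂ Ioc c d) := by
  rw [← measureReal_union _ (measurableSet_rect _ _ _ _)]
  · congr 1
    ext z
    simp only [Complex.mem_reProdIm, mem_union, ← Ioc_union_Ioc_eq_Ioc ham hmb]
    tauto
  · rw [Set.disjoint_left]
    intro z h1 h2
    exact absurd h1.1.2 (not_le.2 h2.1.1)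

lemma real_split_im (μ : Measure ℂ) [IsFiniteMeasure μ] {a b c d : ℝ} (m : ℝ) (hcm : c ≤ m)
    (hmd : m ≤ d) : μ.real (Ioc a b ×ℂ Ioc c d) =
      μ.real (Ioc a b ×ℂ Ioc c m) + μ.real (Ioc a b ×ℂ Ioc m d) := by
  rw [← measureReal_union _ (measurableSet_rect _ _ _ _)]
  · congr 1
    ext z
    simp only [Complex.mem_reProdIm, mem_union, ← Ioc_union_Ioc_eq_Ioc hcm hmd]
    tauto
  · rw [Set.disjoint_left]
    intro z h1 h2
    exact absurd h1.2.2 (not_le.2 h2.2.1)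

/-- Repeated quadrisection: a bound of the boundary integral by a multiple of a measure passes
from rectangles of size `w × h` to rectangles of size `2 ^ m w × 2 ^ m h`, since both sides are
additive. The measure is evaluated on half-open rectangles, so that the pieces are disjoint. -/
lemma norm_bdry_le_measure {f : ℂ → ℂ} {K : Set ℂ} (hf : ContinuousOn f K) (μ : Measure ℂ)
    [IsFiniteMeasure μ] {A w h : ℝ} (hw : 0 ≤ w) (hh : 0 ≤ h)
    (base : ∀ a c : ℝ, Icc a (a + w) ×ℂ Icc c (c + h) ⊆ K →
      ‖bdry f a (a + w) c (c + h)‖ ≤ A * μ.real (Ioc a (a + w) ×ℂ Ioc c (c + h))) (m : ℕ) :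
    ∀ a c : ℝ, Icc a (a + 2 ^ m * w) ×ℂ Icc c (c + 2 ^ m * h) ⊆ K →
      ‖bdry f a (a + 2 ^ m * w) c (c + 2 ^ m * h)‖ ≤
        A * μ.real (Ioc a (a + 2 ^ m * w) ×ℂ Ioc c (c + 2 ^ m * h)) := by
  induction m with
  | zero => simpa using base
  | succ m ih =>
    intro a c hK
    have hw' : 0 ≤ 2 ^ m * w := by positivity
    have hh' : 0 ≤ 2 ^ m * h := by positivity
    rw [pow_succ', mul_assoc, two_mul, mul_assoc, two_mul, ← add_assoc, ← add_assoc] at hK ⊢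
    generalize 2 ^ m * w = W at *
    generalize 2 ^ m * h = H at *
    have hsub : ∀ a' b' c' d' : ℝ, a ≤ a' → b' ≤ a + W + W → c ≤ c' → d' ≤ c + H + H →
        Icc a' b' ×ℂ Icc c' d' ⊆ K := fun a' b' c' d' h1 h2 h3 h4 =>
      (Complex.reProdIm_subset_iff.2
        (prod_mono (Icc_subset_Icc h1 h2) (Icc_subset_Icc h3 h4))).trans hK
    rw [bdry_split_re (a + W) (by linarith) (by linarith) (by linarith) (hf.mono hK),
      bdry_split_im (c + H) (by linarith) (by linarith) (by linarith)
        (hf.mono (hsub a (a + W) c (c + H + H) (by linarith) (by linarith) (by linarith)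
          (by linarith))),
      bdry_split_im (c + H) (by linarith) (by linarith) (by linarith)
        (hf.mono (hsub (a + W) (a + W + W) c (c + H + H) (by linarith) (by linarith) (by linarith)
          (by linarith))),
      real_split_re μ (a + W) (by linarith) (by linarith),
      real_split_im μ (c + H) (by linarith) (by linarith),
      real_split_im μ (a := a + W) (c + H) (by linarith) (by linarith)]
    have i1 := ih a c (hsub _ _ _ _ (by linarith) (by linarith) (by linarith) (by linarith))
    have i2 := ih a (c + H) (hsub _ _ _ _ (by linarith) (by linarith) (by linarith) (by linarith))
    have i3 := ih (a + W) c (hsub _ _ _ _ (by linarith) (by linarith) (by linarith) (by linarith))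
    have i4 := ih (a + W) (c + H)
      (hsub _ _ _ _ (by linarith) (by linarith) (by linarith) (by linarith))
    refine (norm_add_le _ _).trans ?_
    have j1 := norm_add_le (bdry f a (a + W) c (c + H)) (bdry f a (a + W) (c + H) (c + H + H))
    have j2 := norm_add_le (bdry f (a + W) (a + W + W) c (c + H))
      (bdry f (a + W) (a + W + W) (c + H) (c + H + H))
    linarith

/-! ### Sets of finite length -/

/-- `C` has finite length in the following weak sense: for some `L` and every `n ≥ 1`, it is
covered by `n + 1` discs of radius `L / n`. -/
def FiniteLength (C : Set ℂ) : Prop :=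
  ∃ L : ℝ, 0 ≤ L ∧ ∀ n : ℕ, 0 < n → ∃ p : ℕ → ℂ,
    C ⊆ ⋃ k ∈ Finset.range (n + 1), Metric.closedBall (p k) (L / n)

lemma finiteLength_image {g : ℝ → ℂ} (hg : ContDiff ℝ 1 g) (a b : ℝ) :
    FiniteLength (g '' Icc a b) := by
  rcases lt_or_ge b a with hba | hab
  · exact ⟨0, le_rfl, fun n _ => ⟨0, by simp [Icc_eq_empty_of_lt hba]⟩⟩
  obtain ⟨K, hK⟩ := hg.contDiffOn.exists_lipschitzOnWith one_ne_zero (convex_Icc a b) isCompact_Icc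
  refine ⟨K * (b - a), mul_nonneg K.2 (sub_nonneg.2 hab), fun n hn =>
    ⟨fun k => g (a + k * ((b - a) / n)), ?_⟩⟩
  have hn' : (0 : ℝ) < n := by exact_mod_cast hn
  rintro _ ⟨t, ht, rfl⟩
  rcases hab.eq_or_lt with rfl | hlt
  · have : t = a := le_antisymm ht.2 ht.1
    simp only [mem_iUnion]
    exact ⟨0, by simp, by simp [this]⟩
  have hs : 0 < (b - a) / n := div_pos (sub_pos.2 hlt) hn'
  have hq : 0 ≤ (t - a) / ((b - a) / n) := div_nonneg (sub_nonneg.2 ht.1) hs.le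
  have hqn : (t - a) / ((b - a) / n) ≤ n := by
    rw [div_le_iff₀ hs, mul_div_cancel₀ _ hn'.ne']; linarith [ht.2]
  set k := ⌊(t - a) / ((b - a) / n)⌋₊ with hk
  have hkn : k ≤ n := Nat.floor_le_of_le hqn
  have k1 : k * ((b - a) / n) ≤ t - a := (le_div_iff₀ hs).1 (Nat.floor_le hq)
  have k2 : t - a < (k + 1) * ((b - a) / n) := (div_lt_iff₀ hs).1 (Nat.lt_floor_add_one _)
  simp only [mem_iUnion]
  refine ⟨k, by simpa [Nat.lt_succ_iff] using hkn, ?_⟩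
  rw [Metric.mem_closedBall]
  have hmem : a + k * ((b - a) / n) ∈ Icc a b :=
    ⟨by linarith [mul_nonneg (Nat.cast_nonneg (α := ℝ) k) hs.le], by linarith [ht.2]⟩
  refine (hK.dist_le_mul t ht _ hmem).trans ?_
  rw [mul_div_assoc]
  refine mul_le_mul_of_nonneg_left ?_ K.2
  rw [Real.dist_eq, abs_of_nonneg (by linarith)]
  linarith

/-! ### Painlevé's theorem -/

lemma isCompact_rect (a b c d : ℝ) : IsCompact (Icc a b ×ℂ Icc c d) := by
  have h : Icc a b ×ℂ Icc c d = Complex.equivRealProdCLM.symm '' (Icc a b ×ˢ Icc c d) := by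
    ext z
    constructor
    · exact fun hz => ⟨(z.re, z.im), hz, by simp [Complex.ext_iff]⟩
    · rintro ⟨p, hp, rfl⟩
      exact ⟨hp.1, hp.2⟩
  rw [h]
  exact (isCompact_Icc.prod isCompact_Icc).image (by fun_prop)

/-- Integrals around rectangles vanish for a continuous function that is holomorphic off a set
of finite length. -/
lemma bdry_eq_zero {f : ℂ → ℂ} {C : Set ℂ} (hC : FiniteLength C) {a b c d : ℝ} (hab : a ≤ b)
    (hcd : c ≤ d) (hf : ContinuousOn f (Icc a b ×ℂ Icc c d))
    (hd : ∀ x ∈ (Icc a b ×ℂ Icc c d) \ C, DifferentiableAt ℂ f x) : bdry f a b c d = 0 := by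
  rcases hab.eq_or_lt with rfl | hab
  · simp [bdry]
  rcases hcd.eq_or_lt with rfl | hcd
  · simp [bdry]
  obtain ⟨L, hL, hcov⟩ := hC
  have hba : 0 < b - a := sub_pos.2 hab
  have hdc : 0 < d - c := sub_pos.2 hcd
  set D := (b - a) + (d - c) with hD
  have hDpos : 0 < D := by positivity
  set M := 2 * D * (π * (L + D) ^ 2) / ((b - a) * (d - c)) with hM
  have hMnn : 0 ≤ M := by positivity
  suffices H : ∀ ε > 0, ‖bdry f a b c d‖ ≤ ε * M by
    rw [← norm_le_zero_iff]
    refine le_of_forall_pos_le_add fun ε hε => ?_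
    refine (H (ε / (M + 1)) (by positivity)).trans ?_
    rw [zero_add, div_mul_eq_mul_div, div_le_iff₀ (by positivity)]
    nlinarith
  intro ε hε
  obtain ⟨δ, hδ, huc⟩ := Metric.uniformContinuousOn_iff_le.1
    ((isCompact_rect a b c d).uniformContinuousOn_of_continuous hf) ε hε
  obtain ⟨m, hm⟩ := pow_unbounded_of_one_lt (D / δ) (one_lt_two : (1 : ℝ) < 2)
  obtain ⟨p, hp⟩ := hcov (2 ^ m) (by positivity)
  push_cast at hp
  set n : ℝ := 2 ^ m with hn
  have hnpos : 0 < n := by positivity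
  have hn1 : 1 ≤ n := one_le_pow₀ one_le_two
  have hDn : D / n ≤ δ := by
    rw [div_lt_iff₀ hδ] at hm
    rw [div_le_iff₀ hnpos]
    linarith
  -- `N` contains every cell of the `n × n` grid that meets `C`; its area is `O(1 / n)`.
  set N := ⋃ k ∈ Finset.range (2 ^ m + 1), Metric.closedBall (p k) ((L + D) / n) with hN
  have hNvol : volume.real N ≤ (n + 1) * (((L + D) / n) ^ 2 * π) := by
    refine (measureReal_biUnion_finset_le _ _).trans ?_
    have : ∀ k, volume.real (Metric.closedBall (p k) ((L + D) / n)) = ((L + D) / n) ^ 2 * π := by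
      intro k
      rw [Measure.real, Complex.volume_closedBall, ENNReal.toReal_mul, ENNReal.toReal_pow,
        ENNReal.toReal_ofReal (by positivity)]
      simp
    rw [Finset.sum_congr rfl fun k _ => this k]
    simp [hn]
  have hNfin : volume N < ⊤ := by
    refine (measure_biUnion_finset_le _ _).trans_lt (ENNReal.sum_lt_top.2 fun k _ => ?_)
    exact measure_closedBall_lt_top
  have : IsFiniteMeasure (volume.restrict N) := ⟨by simpa using hNfin⟩
  set A := ε * D * n / ((b - a) * (d - c)) with hA
  have hAnn : 0 ≤ A := by positivity
  have hw : 0 ≤ (b - a) / n := by positivity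
  have hh : 0 ≤ (d - c) / n := by positivity
  have key := norm_bdry_le_measure hf (volume.restrict N) (A := A) hw hh ?_ m a c ?_
  · rw [← hn, mul_div_cancel₀ _ hnpos.ne', mul_div_cancel₀ _ hnpos.ne', add_sub_cancel,
      add_sub_cancel] at key
    refine key.trans ?_
    have : (volume.restrict N).real (Ioc a b ×ℂ Ioc c d) ≤ volume.real N := by
      rw [measureReal_restrict_apply (measurableSet_rect _ _ _ _)]
      exact measureReal_mono inter_subset_right hNfin.ne
    calc A * (volume.restrict N).real (Ioc a b ×ℂ Ioc c d)
        ≤ A * ((n + 1) * (((L + D) / n) ^ 2 * π)) :=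
          mul_le_mul_of_nonneg_left (this.trans hNvol) hAnn
      _ ≤ A * ((2 * n) * (((L + D) / n) ^ 2 * π)) := by gcongr; linarith
      _ = ε * M := by rw [hA, hM]; field_simp
  · intro a' c' hK
    have ha' : a' ≤ a' + (b - a) / n := by linarith
    have hc' : c' ≤ c' + (d - c) / n := by linarith
    have hdist : ∀ x ∈ Icc a' (a' + (b - a) / n) ×ℂ Icc c' (c' + (d - c) / n),
        ∀ y ∈ Icc a' (a' + (b - a) / n) ×ℂ Icc c' (c' + (d - c) / n), dist x y ≤ D / n := by
      intro x hx y hy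
      rw [Complex.dist_eq]
      refine (Complex.norm_le_abs_re_add_abs_im _).trans ?_
      rw [hD, add_div, Complex.sub_re, Complex.sub_im]
      have h1 := hx.1; have h2 := hx.2; have h3 := hy.1; have h4 := hy.2
      simp only [mem_preimage, mem_Icc] at h1 h2 h3 h4
      refine add_le_add (abs_le.2 ⟨?_, ?_⟩) (abs_le.2 ⟨?_, ?_⟩) <;> linarith
    by_cases hmeet : ∃ q ∈ Icc a' (a' + (b - a) / n) ×ℂ Icc c' (c' + (d - c) / n), q ∈ C
    · obtain ⟨q, hq, hqC⟩ := hmeet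
      have hsub : Ioc a' (a' + (b - a) / n) ×ℂ Ioc c' (c' + (d - c) / n) ⊆ N := by
        intro x hx
        have hx' : x ∈ Icc a' (a' + (b - a) / n) ×ℂ Icc c' (c' + (d - c) / n) :=
          ⟨Ioc_subset_Icc_self hx.1, Ioc_subset_Icc_self hx.2⟩
        have hqN := hp hqC
        simp only [hN, mem_iUnion, Metric.mem_closedBall] at hqN ⊢
        obtain ⟨k, hk, hqk⟩ := hqN
        refine ⟨k, hk, (dist_triangle x q (p k)).trans ?_⟩
        rw [add_div]
        linarith [hdist x hx' q hq]
      rw [measureReal_restrict_apply (measurableSet_rect _ _ _ _), inter_eq_left.2 hsub,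
        volume_real_rect ha' hc', add_sub_cancel_left, add_sub_cancel_left]
      refine (norm_bdry_le ha' hc' (hf.mono hK) (ε := ε) fun x hx y hy => ?_).trans_eq ?_
      · rw [← dist_eq_norm]
        exact huc x (hK hx) y (hK hy) ((hdist x hx y hy).trans hDn)
      · rw [add_sub_cancel_left, add_sub_cancel_left, ← add_div, ← hD, hA]
        field_simp
    · have h0 : bdry f a' (a' + (b - a) / n) c' (c' + (d - c) / n) = 0 := by
        have := Complex.integral_boundary_rect_eq_zero_of_differentiableOn f ⟨a', c'⟩
          ⟨a' + (b - a) / n, c' + (d - c) / n⟩ ?_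
        · exact this
        · simp only [uIcc_of_le ha', uIcc_of_le hc']
          exact fun x hx => (hd x ⟨hK hx, fun hxC => hmeet ⟨x, hx, hxC⟩⟩).differentiableWithinAt
      rw [h0, norm_zero]
      exact mul_nonneg hAnn measureReal_nonneg
  · rw [← hn, mul_div_cancel₀ _ hnpos.ne', mul_div_cancel₀ _ hnpos.ne', add_sub_cancel,
      add_sub_cancel]

lemma bdry_swap_re (f : ℂ → ℂ) (a b c d : ℝ) : bdry f b a c d = -bdry f a b c d := by
  simp only [bdry, intervalIntegral.integral_symm a b]
  ring

lemma bdry_swap_im (f : ℂ → ℂ) (a b c d : ℝ) : bdry f a b d c = -bdry f a b c d := by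
  simp only [bdry, intervalIntegral.integral_symm c d, smul_neg]
  ring

/-- Painlevé's removability theorem: sets of finite length are removable for continuous
functions that are holomorphic off the set. -/
theorem differentiableOn_of_finiteLength {f : ℂ → ℂ} {Ω C : Set ℂ} (hΩ : IsOpen Ω)
    (hC : FiniteLength C) (hf : ContinuousOn f Ω) (hd : ∀ x ∈ Ω \ C, DifferentiableAt ℂ f x) :
    DifferentiableOn ℂ f Ω := by
  refine (Complex.isConservativeOn_and_continuousOn_iff_isDifferentiableOn hΩ).1 ⟨?_, hf⟩
  intro z w hzw
  rw [← add_eq_zero_iff_eq_neg, Complex.wedgeIntegral_add_wedgeIntegral_eq]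
  change bdry f z.re w.re z.im w.im = 0
  change uIcc z.re w.re ×ℂ uIcc z.im w.im ⊆ Ω at hzw
  have main : ∀ a b c d : ℝ, a ≤ b → c ≤ d → Icc a b ×ℂ Icc c d ⊆ Ω → bdry f a b c d = 0 :=
    fun a b c d hab hcd h =>
      bdry_eq_zero hC hab hcd (hf.mono h) fun x hx => hd x ⟨h hx.1, hx.2⟩
  rcases le_total z.re w.re with h1 | h1 <;> rcases le_total z.im w.im with h2 | h2
  · rw [uIcc_of_le h1, uIcc_of_le h2] at hzw
    exact main _ _ _ _ h1 h2 hzw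
  · rw [uIcc_of_le h1, uIcc_of_ge h2] at hzw
    rw [bdry_swap_im, main _ _ _ _ h1 h2 hzw, neg_zero]
  · rw [uIcc_of_ge h1, uIcc_of_le h2] at hzw
    rw [bdry_swap_re, main _ _ _ _ h1 h2 hzw, neg_zero]
  · rw [uIcc_of_ge h1, uIcc_of_ge h2] at hzw
    rw [bdry_swap_re, bdry_swap_im, main _ _ _ _ h1 h2 hzw, neg_zero, neg_zero]

/-! ### Harmonic functions -/

lemma lap_eq_laplacian {v : ℂ → ℝ} {x : ℂ} (hv : ContDiffAt ℝ 2 v x) :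
    lap v x = Laplacian.laplacian v x := by
  have h : DifferentiableAt ℝ (fderiv ℝ v) x :=
    (hv.fderiv_right (m := 1) (by norm_num)).differentiableAt one_ne_zero
  rw [InnerProductSpace.laplacian_eq_iteratedFDeriv_complexPlane, lap]
  simp [iteratedFDeriv_two_apply, fderiv_clm_apply h]

/-- If `v` is `C¹` on an open set `Ω ⊂ ℝ² ≅ ℂ` and harmonic off a `C¹`
curve `C ⊂ Ω` (the image of a compact interval under a `C¹` map), then `v` is harmonic on
all of `Ω`: it is smooth there and its Laplacian vanishes everywhere in `Ω`. -/
theorem harmonic_across_C1_curve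
    (Ω : Set ℂ) (hΩ : IsOpen Ω)
    (g : ℝ → ℂ) (hg : ContDiff ℝ 1 g) (a b : ℝ)
    (C : Set ℂ) (hC : C = g '' Set.Icc a b) (hCΩ : C ⊆ Ω)
    (v : ℂ → ℝ)
    (hv1 : ContDiffOn ℝ 1 v Ω)
    (hv2 : ContDiffOn ℝ 2 v (Ω \ C))
    (hharm : ∀ x ∈ Ω \ C, lap v x = 0) :
    ContDiffOn ℝ (⊤ : ℕ∞) v Ω ∧ ∀ x ∈ Ω, lap v x = 0 := by
  have hCfin : FiniteLength C := hC ▸ finiteLength_image hg a b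
  have hCcl : IsClosed C := hC ▸ (isCompact_Icc.image hg.continuous).isClosed
  have hopen : IsOpen (Ω \ C) := hΩ.sdiff hCcl
  set F : ℂ → ℂ := fun z => fderiv ℝ v z 1 - Complex.I * fderiv ℝ v z Complex.I with hF
  have hharmAt : ∀ x ∈ Ω \ C, InnerProductSpace.HarmonicAt v x := fun x hx => by
    refine ⟨hv2.contDiffAt (hopen.mem_nhds hx), ?_⟩
    filter_upwards [hopen.mem_nhds hx] with y hy
    rw [← lap_eq_laplacian (hv2.contDiffAt (hopen.mem_nhds hy)), hharm y hy, Pi.zero_apply]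
  have hdv : ContinuousOn (fderiv ℝ v) Ω := hv1.continuousOn_fderiv_of_isOpen hΩ le_rfl
  have hFc : ContinuousOn F Ω := by
    have h1 : ContinuousOn (fun z => fderiv ℝ v z 1) Ω := hdv.clm_apply continuousOn_const
    have h2 : ContinuousOn (fun z => fderiv ℝ v z Complex.I) Ω :=
      hdv.clm_apply continuousOn_const
    exact (Complex.continuous_ofReal.comp_continuousOn h1).sub
      (continuousOn_const.mul (Complex.continuous_ofReal.comp_continuousOn h2))
  have hFd : DifferentiableOn ℂ F Ω := differentiableOn_of_finiteLength hΩ hCfin hFc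
    fun x hx => HarmonicAt.differentiableAt_complex_partial (hharmAt x hx)
  have hre : ∀ z, fderiv ℝ v z 1 = (F z).re := fun z => by simp [hF]
  have him : ∀ z, fderiv ℝ v z Complex.I = -(F z).im := fun z => by simp [hF]
  have hFs : ContDiffOn ℝ (⊤ : ℕ∞) F Ω := (hFd.contDiffOn hΩ).restrict_scalars ℝ
  have hgrad : fderiv ℝ v = fun z => (F z).re • Complex.reCLM - (F z).im • Complex.imCLM := by
    refine funext fun z => ContinuousLinearMap.ext fun h => ?_
    have hh : h = h.re • (1 : ℂ) + h.im • Complex.I := by simp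
    conv_lhs => rw [hh, map_add, map_smul, map_smul, hre, him]
    simp only [sub_apply, smul_apply, smul_eq_mul,
      Complex.reCLM_apply, Complex.imCLM_apply]
    ring
  refine ⟨(contDiffOn_infty_iff_fderiv_of_isOpen hΩ).2 ⟨hv1.differentiableOn one_ne_zero, ?_⟩,
    fun x hx => ?_⟩
  · rw [hgrad]
    exact ((Complex.reCLM.contDiff.comp_contDiffOn hFs).smul contDiffOn_const).sub
      ((Complex.imCLM.contDiff.comp_contDiffOn hFs).smul contDiffOn_const)
  · -- With `v₁ = Re F` and `v₂ = -Im F`, the Laplacian is `Re F' - Im (I F') = 0`.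
    have hx' := ((hFd.differentiableAt (hΩ.mem_nhds hx)).hasDerivAt.hasFDerivAt).restrictScalars ℝ
    have e1 := (Complex.reCLM.hasFDerivAt.comp x hx').fderiv
    have e2 := (Complex.imCLM.hasFDerivAt.comp x hx').neg.fderiv
    have f1 : (fun y => fderiv ℝ v y 1) = Complex.reCLM ∘ F := funext hre
    have f2 : (fun y => fderiv ℝ v y Complex.I) = -(Complex.imCLM ∘ F) := funext him
    rw [lap, f1, f2, e1, e2]
    simp
end
end

section
/- Let γ : ℝ → ℝ² be a closed smooth regular curve with image Γ and unit normal n(t) := (γ₂'(t), −γ₁'(t)), and let τ : ℝ → ℝ be continuous and L-periodic. Define the Laplace double-layer potential D[τ](x) := (1/(2π)) ∫_0^L (⟨n(s), x − γ(s)⟩ / ‖x − γ(s)‖²) · τ(s) ds for x ∉ Γ. Then for every t the one-sided limits D⁺(t) := lim_{h→0⁺} D[τ](γ(t) + h·n(t)) and D⁻(t) := lim_{h→0⁺} D[τ](γ(t) − h·n(t)) exist, and the value of the double-layer potential jumps across Γ by the density: D⁺(t) − D⁻(t) = τ(t). -/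
/-!
Near the base point `γ t` the curve is flat to second order, so at `γ t + h n(t)` the double-layer
kernel with source `γ (t + u)` resembles the one of a straight line, the Poisson kernel
`h / (h² + u²)`. The difference of the two kernels is bounded uniformly in `h` and `u`
(`remainder_bound`): over the common denominator its numerator is `O(u² (h² + u²))`
(`numerator_bound`), while the squared distance to the source is at least `δ (h² + u²)`. By
dominated convergence the difference contributes the same limit from both sides of the curve,
namely the integral of the kernel on the curve itself. The Poisson kernel is odd in `h` and an
approximate identity of mass `π` (`tendsto_poisson`), so it contributes `± π τ(t)`, and after
multiplication by `1 / (2π)` the jump is `τ(t)`.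
-/

open MeasureTheory Real Set Filter Topology

noncomputable section

/-- The Euclidean dot product on `ℝ² ≅ ℂ`. -/
def dot2 (z w : ℂ) : ℝ := z.re * w.re + z.im * w.im

lemma abs_dot2_le (z w : ℂ) : |dot2 z w| ≤ ‖z‖ * ‖w‖ := by
  have h : dot2 z w = ((starRingEnd ℂ) z * w).re := by simp [dot2]
  rw [h]
  exact (Complex.abs_re_le_norm _).trans (by simp)

/-- A point `h·(-iT)` on the normal line stays away from a curve point `c = uT + O(u²)`: the exact
distance to `uT` is `√(h² + u²)`, and the error `C u² ≤ |u| / 2` eats up at most half of it. -/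
lemma sq_norm_le_sub {T c : ℂ} {u C : ℝ} (h : ℝ) (hT : ‖T‖ = 1)
    (he : ‖c - u * T‖ ≤ C * u ^ 2) (hu : C * |u| ≤ 1 / 2) :
    (h ^ 2 + u ^ 2) / 4 ≤ ‖h * (-Complex.I * T) - c‖ ^ 2 := by
  have h1 : ‖h * (-Complex.I * T) - u * T‖ = √(h ^ 2 + u ^ 2) := by
    have : (h * (-Complex.I * T) - u * T : ℂ) = (((-u : ℝ) : ℂ) + ((-h : ℝ) : ℂ) * Complex.I) * T := by
      push_cast; ring
    rw [this, norm_mul, hT, mul_one, Complex.norm_add_mul_I]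
    congr 1; ring
  have h2 : |u| ≤ √(h ^ 2 + u ^ 2) := Real.abs_le_sqrt (by nlinarith [sq_nonneg h])
  have h3 : ‖h * (-Complex.I * T) - u * T‖ ≤ ‖h * (-Complex.I * T) - c‖ + ‖c - u * T‖ := norm_sub_le_norm_sub_add_norm_sub _ _ _
  have h4 : √(h ^ 2 + u ^ 2) / 2 ≤ ‖h * (-Complex.I * T) - c‖ := by
    rw [h1] at h3
    have : C * u ^ 2 ≤ |u| / 2 := by
      rw [← sq_abs u]; nlinarith [abs_nonneg u]
    linarith
  calc (h ^ 2 + u ^ 2) / 4 = (√(h ^ 2 + u ^ 2) / 2) ^ 2 := by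
        rw [div_pow, Real.sq_sqrt (by positivity)]; norm_num
    _ ≤ _ := by gcongr

/-- The scalar part of `numerator_bound`, where `A1, …, A4` stand for dot products of unit vectors
with `d = S - T` (norm `p`) and `e = c - uT` (norm `q`). -/
lemma numerator_bound_real {h u C p q A1 A2 A3 A4 : ℝ} (hp : 0 ≤ p) (hq : 0 ≤ q)
    (hd : p ≤ C * |u|) (he : q ≤ C * u ^ 2) (hh : |h| ≤ 1)
    (a1 : |A1| ≤ p) (a2 : |A2| ≤ q) (a3 : |A3| ≤ q) (a4 : |A4| ≤ q) :
    |(h - h * p ^ 2 / 2 + u * A1 - A2) * (h ^ 2 + u ^ 2)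
      - h * (h ^ 2 + u ^ 2 - 2 * h * A3 + 2 * u * A4 + q ^ 2)|
      ≤ (6 * C + 2 * C ^ 2) * u ^ 2 * (h ^ 2 + u ^ 2) := by
  have hw : 0 ≤ h ^ 2 + u ^ 2 := by positivity
  have hu2 := sq_abs u
  have hh2 := sq_abs h
  have hu0 := abs_nonneg u
  have hh0 := abs_nonneg h
  have b1 : |h * p ^ 2 / 2| ≤ C ^ 2 / 2 * u ^ 2 := by
    rw [abs_div, abs_mul, abs_of_nonneg (sq_nonneg p), abs_two]
    have : p ^ 2 ≤ (C * |u|) ^ 2 := by gcongr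
    have : |h| * p ^ 2 ≤ 1 * (C * |u|) ^ 2 := by gcongr
    rw [mul_pow, hu2] at this; linarith
  have b2 : |u * A1| ≤ C * u ^ 2 := by
    rw [abs_mul]
    calc |u| * |A1| ≤ |u| * (C * |u|) := by gcongr; linarith
      _ = C * u ^ 2 := by rw [← hu2]; ring
  have b3 : |A2| ≤ C * u ^ 2 := a2.trans he
  have c1 : |h * (h * A3)| ≤ C * u ^ 2 * (h ^ 2 + u ^ 2) := by
    rw [← mul_assoc, abs_mul, ← sq, abs_of_nonneg (sq_nonneg h)]
    calc h ^ 2 * |A3| ≤ (h ^ 2 + u ^ 2) * (C * u ^ 2) := by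
          gcongr
          · nlinarith
          · linarith
      _ = _ := by ring
  have c2 : |h * (u * A4)| ≤ C * u ^ 2 * (h ^ 2 + u ^ 2) := by
    rw [← mul_assoc, abs_mul]
    have : |h * u| ≤ h ^ 2 + u ^ 2 := by
      rw [abs_mul]; nlinarith [sq_nonneg (|h| - |u|)]
    calc |h * u| * |A4| ≤ (h ^ 2 + u ^ 2) * (C * u ^ 2) := by
          gcongr
          linarith
      _ = _ := by ring
  have c3 : |h * q ^ 2| ≤ C ^ 2 * u ^ 2 * (h ^ 2 + u ^ 2) := by
    rw [abs_mul, abs_of_nonneg (sq_nonneg q)]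
    calc |h| * q ^ 2 ≤ 1 * (C * u ^ 2) ^ 2 := by gcongr
      _ = C ^ 2 * u ^ 2 * u ^ 2 := by ring
      _ ≤ _ := by gcongr; nlinarith
  have key : |-(h * p ^ 2 / 2) + u * A1 - A2| ≤ (2 * C + C ^ 2 / 2) * u ^ 2 := by
    rw [abs_le] at b1 b2 b3 ⊢
    constructor <;> linarith
  have key2 : |(-(h * p ^ 2 / 2) + u * A1 - A2) * (h ^ 2 + u ^ 2)| ≤
      (2 * C + C ^ 2 / 2) * u ^ 2 * (h ^ 2 + u ^ 2) := by
    rw [abs_mul, abs_of_nonneg hw]; gcongr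
  have hz : 0 ≤ C ^ 2 * u ^ 2 * (h ^ 2 + u ^ 2) := by positivity
  rw [abs_le] at c1 c2 c3 key2 ⊢
  constructor <;> linarith

/-- After clearing denominators, the layer kernel and the Poisson kernel `h / (h² + u²)` differ by
`O(u² (h² + u²))`. Here `T`, `S` are the tangents at the base point and at the curve point, and `c`
is the displacement between these points. The gain of the factor `u²` rests on
`T ⬝ S = 1 - ‖S - T‖² / 2` and on the orthogonality of `-iS` and `S`. -/
lemma numerator_bound {T S c : ℂ} {h u C : ℝ} (hT : ‖T‖ = 1) (hS : ‖S‖ = 1)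
    (hd : ‖S - T‖ ≤ C * |u|) (he : ‖c - u * T‖ ≤ C * u ^ 2) (hh : |h| ≤ 1) :
    |dot2 (-Complex.I * S) (h * (-Complex.I * T) - c) * (h ^ 2 + u ^ 2)
      - h * ‖h * (-Complex.I * T) - c‖ ^ 2| ≤ (6 * C + 2 * C ^ 2) * u ^ 2 * (h ^ 2 + u ^ 2) := by
  set e := c - u * T with he'
  set d := S - T with hd'
  have hT2 : T.re ^ 2 + T.im ^ 2 = 1 := by
    have := Complex.sq_norm T; rw [hT, Complex.normSq_apply] at this; nlinarith
  have hS2 : S.re ^ 2 + S.im ^ 2 = 1 := by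
    have := Complex.sq_norm S; rw [hS, Complex.normSq_apply] at this; nlinarith
  have hI : ‖-Complex.I * S‖ = 1 := by simp [hS]
  have hIT : ‖-Complex.I * T‖ = 1 := by simp [hT]
  have a1 := abs_dot2_le (-Complex.I * S) d
  have a2 := abs_dot2_le (-Complex.I * S) e
  have a3 := abs_dot2_le (-Complex.I * T) e
  have a4 := abs_dot2_le T e
  rw [hI, one_mul] at a1 a2
  rw [hIT, one_mul] at a3
  rw [hT, one_mul] at a4
  have hN : dot2 (-Complex.I * S) (h * (-Complex.I * T) - c) =
      h - h * ‖d‖ ^ 2 / 2 + u * dot2 (-Complex.I * S) d - dot2 (-Complex.I * S) e := by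
    rw [Complex.sq_norm, Complex.normSq_apply]
    simp [dot2, he', hd']
    linear_combination (h/2) * hT2 + (h/2) * hS2
  have hQ : ‖h * (-Complex.I * T) - c‖ ^ 2 = h ^ 2 + u ^ 2
      - 2 * h * dot2 (-Complex.I * T) e + 2 * u * dot2 T e + ‖e‖ ^ 2 := by
    rw [Complex.sq_norm, Complex.normSq_apply, Complex.sq_norm, Complex.normSq_apply]
    simp [dot2, he']
    linear_combination (h ^ 2 + u ^ 2) * hT2
  rw [hN, hQ]
  exact numerator_bound_real (norm_nonneg _) (norm_nonneg _) hd he hh a1 a2 a3 a4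

/-- The one-dimensional Poisson kernel is an approximate identity of total mass `π`. -/
lemma tendsto_poisson {f : ℝ → ℝ} (hf : Continuous f) {a : ℝ} (ha : 0 < a) :
    Tendsto (fun h : ℝ => ∫ u in (-a)..a, h / (h ^ 2 + u ^ 2) * f u) (𝓝[>] 0)
      (𝓝 (π * f 0)) := by
  have hint : Integrable (fun x : ℝ => (1 + x ^ 2)⁻¹) := integrable_inv_one_add_sq
  -- The Poisson kernel is `c φ(c u)` with `c = 1 / h`, up to the factor `π`.
  have key := tendsto_integral_comp_smul_smul_of_integrable (μ := (volume : Measure ℝ))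
    (φ := fun x : ℝ => π⁻¹ * (1 + x ^ 2)⁻¹) (g := (Ioc (-a) a).indicator f)
    (fun x => by positivity)
    (by rw [integral_const_mul, integral_univ_inv_one_add_sq]; field_simp)
    (by
      simp only [Module.finrank_self, pow_one]
      have h1 : Tendsto (fun x : ℝ => ‖x‖⁻¹) (Bornology.cobounded ℝ) (𝓝 0) :=
        tendsto_inv_atTop_zero.comp tendsto_norm_cobounded_atTop
      have h2 : Tendsto (fun x : ℝ => π⁻¹ * ‖x‖⁻¹) (Bornology.cobounded ℝ) (𝓝 0) := by
        simpa using h1.const_mul π⁻¹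
      refine squeeze_zero (fun x => by positivity) (fun x => ?_) h2
      rcases eq_or_ne x 0 with rfl | hx
      · simp
      · have : 0 < ‖x‖ := norm_pos_iff.2 hx
        have h3 : ‖x‖ * (1 + x ^ 2)⁻¹ ≤ ‖x‖⁻¹ := by
          rw [← sq_abs x, ← Real.norm_eq_abs, ← div_eq_mul_inv, inv_eq_one_div, div_le_div_iff₀ (by positivity) this]
          nlinarith
        calc _ = π⁻¹ * (‖x‖ * (1 + x ^ 2)⁻¹) := by ring
          _ ≤ _ := by gcongr)
    ((hf.integrableOn_Ioc).integrable_indicator measurableSet_Ioc)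
    (by
      refine hf.continuousAt.congr ?_
      filter_upwards [Ioc_mem_nhds (neg_lt_zero.2 ha) ha] with x hx
      rw [indicator_of_mem hx])
  have h0 : (Ioc (-a) a).indicator f 0 = f 0 :=
    indicator_of_mem (show (0 : ℝ) ∈ Ioc (-a) a from ⟨neg_lt_zero.2 ha, ha.le⟩) f
  rw [h0] at key
  have key2 := (key.comp tendsto_inv_nhdsGT_zero).const_mul π
  refine key2.congr' ?_
  filter_upwards [self_mem_nhdsWithin] with h hh
  have hh : 0 < h := hh
  rw [intervalIntegral.integral_of_le (by linarith), ← integral_indicator measurableSet_Ioc]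
  simp only [Function.comp]
  rw [← integral_const_mul]
  congr 1
  ext u
  by_cases hu : u ∈ Ioc (-a) a
  · simp only [indicator_of_mem hu, Module.finrank_self, pow_one, smul_eq_mul]
    have : 1 + (h⁻¹ * u) ^ 2 ≠ 0 := by positivity
    field_simp
  · simp [indicator_of_notMem hu]

/-- A closed curve that is injective on one period has no self-intersections at parameter distance
less than the period. -/
lemma curve_ne {γ : ℝ → ℂ} {L : ℝ} (hL : 0 < L) (hγper : Function.Periodic γ L)
    (hγinj : Set.InjOn γ (Set.Ico 0 L)) {t u : ℝ} (hu : u ≠ 0) (huL : |u| < L) :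
    γ (t + u) ≠ γ t := by
  intro h
  have hm : ∀ x, γ (toIcoMod hL 0 x) = γ x := fun x => by
    rw [toIcoMod]; exact hγper.sub_zsmul_eq _
  have hmem : ∀ x, toIcoMod hL 0 x ∈ Ico 0 L := fun x => by
    simpa using toIcoMod_mem_Ico hL 0 x
  have := hγinj (hmem (t + u)) (hmem t) (by rw [hm, hm, h])
  obtain ⟨k, hk⟩ := (toIcoMod_eq_toIcoMod hL).1 this
  have hk' : -u = k * L := by simpa using hk
  have hk0 : k ≠ 0 := by rintro rfl; simp at hk'; exact hu hk'
  have : (1 : ℝ) ≤ |(k : ℝ)| := by exact_mod_cast Int.one_le_abs hk0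
  rw [← abs_neg, hk', abs_mul, abs_of_pos hL] at huL
  nlinarith

/-- First-order Taylor estimates for a curve and its tangent, with one constant on a compact
parameter interval. -/
lemma curve_taylor {γ : ℝ → ℂ} (hγ : ContDiff ℝ 2 γ) (t a : ℝ) :
    ∃ C : ℝ, 0 < C ∧ ∀ u ∈ Icc (-a) a,
      ‖deriv γ (t + u) - deriv γ t‖ ≤ C * |u| ∧
      ‖(γ (t + u) - γ t) - u * deriv γ t‖ ≤ C * u ^ 2 := by
  have hd : Differentiable ℝ γ := hγ.differentiable (by norm_num)
  have hγ' : ContDiff ℝ 1 (deriv γ) := by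
    have : ContDiff ℝ (1 + 1) γ := by convert hγ using 1; norm_num
    exact (contDiff_succ_iff_deriv.1 this).2.2
  have hd' : Differentiable ℝ (deriv γ) := hγ'.differentiable (by norm_num)
  have hc : Continuous (deriv (deriv γ)) := hγ'.continuous_deriv (by norm_num)
  obtain ⟨C₀, hC₀⟩ := (isCompact_Icc (a := t - a) (b := t + a)).exists_bound_of_continuousOn
    hc.continuousOn
  have hC : ∀ x ∈ Icc (t - a) (t + a), ‖deriv (deriv γ) x‖ ≤ max C₀ 1 :=
    fun x hx => (hC₀ x hx).trans (le_max_left _ _)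
  set C := max C₀ 1
  have hCpos : 0 < C := lt_of_lt_of_le one_pos (le_max_right _ _)
  have A : ∀ u ∈ Icc (-a) a, ‖deriv γ (t + u) - deriv γ t‖ ≤ C * |u| := by
    intro u hu
    have := (convex_Icc (t - a) (t + a)).norm_image_sub_le_of_norm_deriv_le
      (f := deriv γ) (x := t) (y := t + u) (fun x _ => hd' x) hC
      ⟨by linarith [hu.1, hu.2], by linarith [hu.1, hu.2]⟩
      ⟨by linarith [hu.1], by linarith [hu.2]⟩
    simpa using this
  refine ⟨C, hCpos, fun u hu => ⟨A u hu, ?_⟩⟩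
  -- Mean value inequality for `v ↦ γ (t + v) - v γ'(t)`, whose derivative is controlled by `A`.
  have hg : ∀ v : ℝ, HasDerivAt (fun v : ℝ => γ (t + v) - v * deriv γ t)
      (deriv γ (t + v) - deriv γ t) v := by
    intro v
    have h1 : HasDerivAt (fun v : ℝ => γ (t + v)) (deriv γ (t + v)) v :=
      (hd (t + v)).hasDerivAt.comp_const_add t v
    have h2 : HasDerivAt (fun v : ℝ => (v : ℂ) * deriv γ t) (1 * deriv γ t) v :=
      (Complex.ofRealCLM.hasDerivAt (x := v)).mul_const _
    rw [one_mul] at h2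
    exact h1.sub h2
  have := (convex_Icc (-|u|) |u|).norm_image_sub_le_of_norm_hasDerivWithin_le
      (C := C * |u|) (x := 0) (y := u) (fun v _ => (hg v).hasDerivWithinAt)
      (fun v hv => ?_) ⟨by simp, by simp⟩ ⟨neg_abs_le u, le_abs_self u⟩
  · have e : C * |u| * ‖u - 0‖ = C * u ^ 2 := by
      rw [sub_zero, Real.norm_eq_abs, mul_assoc, abs_mul_abs_self, sq]
    rw [e] at this
    have e2 : γ (t + u) - γ t - u * deriv γ t =
        γ (t + u) - u * deriv γ t - (γ (t + 0) - ((0 : ℝ) : ℂ) * deriv γ t) := by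
      simp; ring
    rw [e2]
    exact this
  · have hv' : |v| ≤ |u| := abs_le.2 hv
    have hua : |u| ≤ a := abs_le.2 hu
    refine (A v (abs_le.1 (hv'.trans hua))).trans (by gcongr)

/-- The double-layer kernel (without the factor `1 / (2π)`) at the point `γ t + h n(t)`, as a
function of the parameter offset `u` of the source point `γ (t + u)`; negative `h` gives the other
side of the curve. At `h = u = 0` it takes the junk value `0`. -/
def layerKernel (γ : ℝ → ℂ) (t h u : ℝ) : ℝ :=
  dot2 (-Complex.I * deriv γ (t + u)) (h * (-Complex.I * deriv γ t) - (γ (t + u) - γ t)) /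
    ‖h * (-Complex.I * deriv γ t) - (γ (t + u) - γ t)‖ ^ 2

/-- The layer kernel minus the Poisson kernel is bounded uniformly up to the curve. The Taylor
estimates handle `|u|` small; for the remaining `u` the curve has positive distance `m` from the
base point by compactness. -/
lemma remainder_bound {γ : ℝ → ℂ} {t a : ℝ} (hγ : ContDiff ℝ 2 γ)
    (hγunit : ∀ t : ℝ, ‖deriv γ t‖ = 1)
    (hne : ∀ u ∈ Icc (-a) a, u ≠ 0 → γ (t + u) ≠ γ t) :
    ∃ K h₀ : ℝ, 0 < h₀ ∧ ∀ h : ℝ, |h| < h₀ → ∀ u ∈ Icc (-a) a, u ≠ 0 →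
      |layerKernel γ t h u - h / (h ^ 2 + u ^ 2)| ≤ K := by
  obtain ⟨C, hC, hT⟩ := curve_taylor hγ t a
  have hcont : Continuous fun u => ‖γ (t + u) - γ t‖ := by
    have := hγ.continuous
    fun_prop
  have hK : IsCompact (Icc (-a) a ∩ {u : ℝ | 1 / 2 ≤ C * |u|}) :=
    isCompact_Icc.inter_right (isClosed_le continuous_const (by fun_prop))
  obtain ⟨m, hm, hmle⟩ := hK.exists_forall_le' (f := fun u => ‖γ (t + u) - γ t‖)
    hcont.continuousOn (a := 0) (by
      rintro u ⟨hu, hu2⟩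
      refine norm_pos_iff.2 (sub_ne_zero.2 (hne u hu ?_))
      rintro rfl
      norm_num at hu2)
  -- `δ (h² + u²)` bounds the squared distance below in both regimes: `1 / 4` comes from
  -- `sq_norm_le_sub`, the other entry from `(m / 2)² ≥ δ (1 + a²)`.
  set δ := min (1 / 4) (m ^ 2 / (4 * (1 + a ^ 2))) with hδ
  have hδpos : 0 < δ := lt_min (by norm_num) (by positivity)
  refine ⟨(6 * C + 2 * C ^ 2) / δ, min 1 (m / 2), lt_min one_pos (by positivity),
    fun h hh u hu hu0 => ?_⟩
  obtain ⟨hd, he⟩ := hT u hu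
  have hh1 : |h| ≤ 1 := (hh.trans_le (min_le_left _ _)).le
  have hh2 : |h| ≤ m / 2 := (hh.trans_le (min_le_right _ _)).le
  have hnum := numerator_bound (hγunit t) (hγunit (t + u)) hd he hh1
  have hw : 0 < h ^ 2 + u ^ 2 := by positivity
  have hQ : δ * (h ^ 2 + u ^ 2) ≤
      ‖h * (-Complex.I * deriv γ t) - (γ (t + u) - γ t)‖ ^ 2 := by
    rcases le_total (C * |u|) (1 / 2) with hu2 | hu2
    · refine le_trans ?_ (sq_norm_le_sub h (hγunit t) he hu2)
      have : δ ≤ 1 / 4 := min_le_left _ _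
      nlinarith
    · have h1 := hmle u ⟨hu, hu2⟩
      have h2 : ‖h * (-Complex.I * deriv γ t)‖ = |h| := by simp [hγunit t]
      have h3 : m / 2 ≤ ‖h * (-Complex.I * deriv γ t) - (γ (t + u) - γ t)‖ := by
        have := norm_sub_norm_le (γ (t + u) - γ t) (h * (-Complex.I * deriv γ t))
        rw [norm_sub_rev (γ (t + u) - γ t), h2] at this
        linarith
      have h4 : h ^ 2 + u ^ 2 ≤ 1 + a ^ 2 := by
        have : h ^ 2 ≤ 1 := (sq_le_one_iff_abs_le_one h).2 hh1
        have : u ^ 2 ≤ a ^ 2 := sq_le_sq.2 ((abs_le.2 hu).trans (le_abs_self a))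
        linarith
      calc δ * (h ^ 2 + u ^ 2) ≤ m ^ 2 / (4 * (1 + a ^ 2)) * (1 + a ^ 2) := by
            gcongr; exact min_le_right _ _
        _ = (m / 2) ^ 2 := by field_simp; norm_num
        _ ≤ _ := by gcongr
  unfold layerKernel
  generalize ‖h * (-Complex.I * deriv γ t) - (γ (t + u) - γ t)‖ ^ 2 = Q at *
  generalize dot2 (-Complex.I * deriv γ (t + u))
    (h * (-Complex.I * deriv γ t) - (γ (t + u) - γ t)) = N at *
  have hQ0 : 0 < Q := lt_of_lt_of_le (by positivity) hQ
  rw [div_sub_div _ _ hQ0.ne' hw.ne', abs_div, abs_of_pos (mul_pos hQ0 hw),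
    div_le_div_iff₀ (by positivity) hδpos]
  have h5 : δ * u ^ 2 ≤ Q := le_trans (by gcongr; nlinarith [sq_nonneg h]) hQ
  calc |N * (h ^ 2 + u ^ 2) - Q * h| * δ
      ≤ (6 * C + 2 * C ^ 2) * u ^ 2 * (h ^ 2 + u ^ 2) * δ := by
        rw [mul_comm Q]; gcongr
    _ = (6 * C + 2 * C ^ 2) * ((δ * u ^ 2) * (h ^ 2 + u ^ 2)) := by ring
    _ ≤ _ := by gcongr

lemma measurable_layerKernel {γ : ℝ → ℂ} (hγ : ContDiff ℝ 2 γ) (t h : ℝ) :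
    Measurable (layerKernel γ t h) := by
  have h1 : Continuous γ := hγ.continuous
  have h2 : Continuous (deriv γ) := hγ.continuous_deriv (by norm_num)
  unfold layerKernel dot2
  exact Measurable.div (Continuous.measurable (by fun_prop)) (Continuous.measurable (by fun_prop))

/-- Off the diagonal the kernel is continuous across the curve, and the Poisson kernel vanishes in
the limit. -/
lemma tendsto_layerKernel {γ : ℝ → ℂ} {t u : ℝ} (hu : γ (t + u) ≠ γ t) (hu0 : u ≠ 0) :
    Tendsto (fun h => layerKernel γ t h u - h / (h ^ 2 + u ^ 2)) (𝓝 0)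
      (𝓝 (layerKernel γ t 0 u)) := by
  have hc : ContinuousAt (fun h => layerKernel γ t h u - h / (h ^ 2 + u ^ 2)) 0 := by
    unfold layerKernel dot2
    refine ContinuousAt.sub (ContinuousAt.div (by fun_prop) (by fun_prop) ?_)
      (ContinuousAt.div (by fun_prop) (by fun_prop) (by simpa using hu0))
    have : γ t - γ (t + u) ≠ 0 := sub_ne_zero.2 hu.symm
    simpa using this
  simpa [ContinuousAt] using hc

/-- Jump relation for the Laplace double-layer potential: for a continuous
`L`-periodic density `τ` on a closed smooth regular curve `γ` with outward unit normal
`n(t) = (γ₂'(t), -γ₁'(t))` (i.e. `-i·γ'(t)` in `ℂ`), the one-sided limits of `D[τ]` along the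
normal exist and jump by the density: `D⁺(t) - D⁻(t) = τ(t)`. -/
theorem doubleLayer_jump_relation
    (γ : ℝ → ℂ) (L : ℝ) (hL : 0 < L)
    (hγsmooth : ContDiff ℝ (⊤ : ℕ∞) γ) (hγper : Function.Periodic γ L)
    (hγinj : Set.InjOn γ (Set.Ico 0 L)) (hγunit : ∀ t : ℝ, ‖deriv γ t‖ = 1)
    (n : ℝ → ℂ) (hn : ∀ t : ℝ, n t = -Complex.I * deriv γ t)
    (τ : ℝ → ℝ) (hτc : Continuous τ) (hτper : Function.Periodic τ L)
    (D : ℂ → ℝ)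
    (hD : ∀ x : ℂ, D x = (1 / (2 * π)) *
      ∫ s in (0:ℝ)..L, (dot2 (n s) (x - γ s) / ‖x - γ s‖ ^ 2) * τ s) :
    ∀ t : ℝ, ∃ Dp Dm : ℝ,
      Filter.Tendsto (fun h : ℝ => D (γ t + h • n t)) (𝓝[>] 0) (𝓝 Dp) ∧
      Filter.Tendsto (fun h : ℝ => D (γ t - h • n t)) (𝓝[>] 0) (𝓝 Dm) ∧
      Dp - Dm = τ t := by
  intro t
  have hγ : ContDiff ℝ 2 γ := contDiff_infty.1 hγsmooth 2
  set a := L / 2 with ha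
  have ha0 : 0 < a := by positivity
  have hne : ∀ u ∈ Icc (-a) a, u ≠ 0 → γ (t + u) ≠ γ t := fun u hu hu0 =>
    curve_ne hL hγper hγinj hu0 ((abs_le.2 hu).trans_lt (by linarith))
  obtain ⟨K, h₀, hh₀, hK⟩ := remainder_bound hγ hγunit hne
  set R : ℝ → ℝ → ℝ := fun h u => layerKernel γ t h u - h / (h ^ 2 + u ^ 2) with hR
  have hsub : uIoc (-a) a ⊆ Icc (-a) a := by
    rw [uIoc_of_le (by linarith)]; exact Ioc_subset_Icc_self
  have hτt : Continuous fun u => τ (t + u) := by fun_prop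
  have hmeas : ∀ h, Measurable fun u => R h u * τ (t + u) := fun h =>
    ((measurable_layerKernel hγ t h).sub (by fun_prop)).mul hτt.measurable
  have hbound : ∀ h, |h| < h₀ → ∀ᵐ u, u ∈ uIoc (-a) a → ‖R h u * τ (t + u)‖ ≤ K * |τ (t + u)| := by
    intro h hh
    filter_upwards [compl_mem_ae_iff.2 (measure_singleton (0 : ℝ))] with u hu0 hu
    rw [norm_mul, Real.norm_eq_abs, Real.norm_eq_abs]
    gcongr
    exact hK h hh u (hsub hu) hu0
  have hbi : IntervalIntegrable (fun u => K * |τ (t + u)|) volume (-a) a :=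
    Continuous.intervalIntegrable (by fun_prop) _ _
  have hsmall : ∀ᶠ h : ℝ in 𝓝 0, |h| < h₀ := by
    have : Tendsto (fun h : ℝ => |h|) (𝓝 0) (𝓝 0) := by
      simpa using (continuous_abs (G := ℝ)).tendsto 0
    exact this.eventually_lt_const hh₀
  have hF : Tendsto (fun h => ∫ u in (-a)..a, R h u * τ (t + u)) (𝓝 0)
      (𝓝 (∫ u in (-a)..a, layerKernel γ t 0 u * τ (t + u))) := by
    refine intervalIntegral.tendsto_integral_filter_of_dominated_convergence _
      (Eventually.of_forall fun h => (hmeas h).aestronglyMeasurable)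
      (hsmall.mono hbound) hbi ?_
    filter_upwards [compl_mem_ae_iff.2 (measure_singleton (0 : ℝ))] with u hu0 hu
    exact (tendsto_layerKernel (hne u (hsub hu) hu0) hu0).mul_const _
  set F₀ := ∫ u in (-a)..a, layerKernel γ t 0 u * τ (t + u)
  have hG := tendsto_poisson hτt ha0
  rw [add_zero] at hG
  -- Shifting the period to `[t - a, t + a]` puts the singularity in the middle of the interval.
  have hsplit : ∀ h : ℝ, h ≠ 0 → |h| < h₀ → D (γ t + h • n t) = 1 / (2 * π) *
      ((∫ u in (-a)..a, R h u * τ (t + u)) +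
        ∫ u in (-a)..a, h / (h ^ 2 + u ^ 2) * τ (t + u)) := by
    intro h h0 hh
    have hdper : Function.Periodic (deriv γ) L := fun s => by
      rw [← deriv_comp_add_const]
      exact congrArg (fun f => deriv f s) (funext hγper)
    rw [hD]
    congr 1
    have hper : Function.Periodic (fun s =>
        (dot2 (n s) (γ t + h • n t - γ s) / ‖γ t + h • n t - γ s‖ ^ 2) * τ s) L := fun s => by
      simp only [hn, hγper s, hτper s, hdper s]
    have e1 := hper.intervalIntegral_add_eq 0 (t + -a)
    rw [zero_add, show t + -a + L = t + a by rw [ha]; ring,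
      ← intervalIntegral.integral_comp_add_left _ t] at e1
    rw [e1, ← intervalIntegral.integral_add]
    · refine intervalIntegral.integral_congr fun u _ => ?_
      have e2 : γ t + h • n t - γ (t + u) =
          h * (-Complex.I * deriv γ t) - (γ (t + u) - γ t) := by
        rw [hn, Complex.real_smul]; ring
      simp only [hR, layerKernel]
      rw [e2, hn]
      ring
    · rw [intervalIntegrable_iff] at hbi ⊢
      refine hbi.mono' (hmeas h).aestronglyMeasurable ?_
      rw [ae_restrict_iff' measurableSet_uIoc]
      exact hbound h hh
    · refine Continuous.intervalIntegrable (Continuous.mul ?_ hτt) _ _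
      exact continuous_const.div (by fun_prop) fun u => by positivity
  have hsm : ∀ᶠ h : ℝ in 𝓝[>] 0, |h| < h₀ := hsmall.filter_mono nhdsWithin_le_nhds
  refine ⟨1 / (2 * π) * (F₀ + π * τ t), 1 / (2 * π) * (F₀ + -(π * τ t)), ?_, ?_, ?_⟩
  · refine (((hF.mono_left nhdsWithin_le_nhds).add hG).const_mul _).congr' ?_
    filter_upwards [self_mem_nhdsWithin, hsm] with h hpos hh
    exact (hsplit h (ne_of_gt hpos) hh).symm
  -- On the other side only the Poisson part changes sign, being odd in `h`.
  · have hneg : Tendsto (fun h : ℝ => -h) (𝓝[>] 0) (𝓝 0) := by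
      have : Tendsto (fun h : ℝ => -h) (𝓝 0) (𝓝 0) := by
        simpa using (continuous_neg (G := ℝ)).tendsto 0
      exact this.mono_left nhdsWithin_le_nhds
    refine (((hF.comp hneg).add hG.neg).const_mul _).congr' ?_
    filter_upwards [self_mem_nhdsWithin, hsm] with h hpos hh
    have := hsplit (-h) (neg_ne_zero.2 (ne_of_gt hpos)) (by rwa [abs_neg])
    rw [neg_smul, ← sub_eq_add_neg] at this
    rw [this, ← intervalIntegral.integral_neg]
    simp only [Function.comp, neg_sq, neg_div, neg_mul]
  · field_simp
    ring
end
end
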